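/- There exist universal constants c > 0 and n₀ such that for all n ≥ n₀, i ∈ {1,…,n}, and k with n ≤ k ≤ n²: suppose a randomized t-round adaptive algorithm making k exact linear measurements per round is such that, for every n×n real matrix A, it outputs unit vectors u', v' ∈ ℝⁿ such that with probability at least 9/10 (over the seed) there exist unit vectors u, v ∈ ℝⁿ with A·v = σᵢ(A)·u and Aᵀ·u = σᵢ(A)·v (an i-th singular vector pair of A) satisfying ‖u' − u‖ ≤ 1/10 and ‖v' − v‖ ≤ 1/10. Then t ≥ c·log(n²/k)/log log n. -/

import Mathlib

/-!
The lower bound is proved for a random planted matrix `A = D + G + s u vᵀ`, where `G` is standard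
Gaussian, `s = √n log n`, and `u`, `v` are independent random unit sign vectors supported on
disjoint blocks of `q = n / 4` coordinates. Every deterministic algorithm obtained by fixing the
seed is shown to fail on it unless it uses enough rounds.

*The diagonal matrix `D` makes the `i`-th singular pair reveal `u`.* With `C = 10000 s`, the
diagonal is `C` on a set `J` of at least `n / 2` coordinates containing both blocks. If `i ≤ n / 2`,
it is `2 C` on the other `i - 1` coordinates, so that the `i`-th singular value is the largest one
coming from `J`; otherwise it is `0` on the other `n - i` coordinates, so that it is the smallest
one coming from `J`. On `J` the matrix is `C I` plus a small perturbation, hence to first order its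
singular values are `C` plus the eigenvalues of the symmetric part of `G + s u vᵀ`, whose extreme
ones are near `± s / 2` because `u` and `v` are orthogonal and `G` has operator norm at most
`s / 1000` (a net argument, `goodG_bound`). So `|σ_i - C| ≥ 9 s / 20`, and this forces the left
vector of any `i`-th singular pair to be correlated with `u` (`corr_of_singVal`).

*Information bound.* The transcript on a Gaussian input with mean `a` has density `dens Q a` with
respect to i.i.d. Gaussian responses (`lintegral_resp`). If the queries see squared mass at most
`T` of the plant `w = u ⊗ v`, the densities with and without plant are comparable: planted
probabilities are at most `exp (-y) + exp (s² T + y)` times the null ones (`change_of_measure`).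
Without plant the queries are independent of `w`, and a fixed orthonormal family of `k` queries
sees more than `τ` of a random sign plant with probability at most `exp (-q τ / 8 + k / (2 q))`
(`card_query_tail`), by the exponential moment of a Rademacher chaos. Likewise a fixed unit vector
is correlated with `u` with probability at most `2 exp (-q / 50)` (`card_corr`). Splitting according
to the first round `j` that sees more than `τ j` gives `round_bound`.

*Parameters.* The thresholds `τ j` can be taken to grow by a factor `O((log n)²)` per round,
starting from `O((k / n²) log n)`. All error terms are then `O(1 / n)` as long as the final budget
is `O(1 / (log n)²)`, so success requires `(log n) ^ (5 t) ≥ n² / k`.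
-/

open MeasureTheory ProbabilityTheory Matrix
open scoped ENNReal Classical

noncomputable section

/-- Squared Euclidean norm of a finitely-indexed real vector. -/
def sqNorm {ι : Type*} [Fintype ι] (x : ι → ℝ) : ℝ := ∑ i, x i ^ 2

/-- Squared Frobenius norm of a real matrix. -/
def frobSq {m n : Type*} [Fintype m] [Fintype n] (A : Matrix m n ℝ) : ℝ :=
  ∑ i, ∑ j, A i j ^ 2

/-- Spectral (ℓ₂ operator) norm of a real matrix. -/
def specNorm {m n : Type*} [Fintype m] [Fintype n] (A : Matrix m n ℝ) : ℝ :=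
  sSup ((fun x : n → ℝ => Real.sqrt (sqNorm (A.mulVec x))) '' {x | sqNorm x ≤ 1})

/-- `i`-th largest singular value (1-based), characterized via
`σ_i(A) = min {‖A − X‖ : rank X ≤ i − 1}`. -/
def singVal {m n : Type*} [Fintype m] [Fintype n] (A : Matrix m n ℝ) (i : ℕ) : ℝ :=
  sInf {c | ∃ X : Matrix m n ℝ, X.rank ≤ i - 1 ∧ c = specNorm (A - X)}

/-- Flattening of an `n × n` matrix into a vector in `ℝ^{n²}`. -/
def vec (n : ℕ) (A : Matrix (Fin n) (Fin n) ℝ) : Fin (n * n) → ℝ :=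
  fun i => A (finProdFinEquiv.symm i).1 (finProdFinEquiv.symm i).2

/-- `u ⊗ v = vec (u vᵀ) ∈ ℝ^{n²}`. -/
def tensor {n : ℕ} (u v : Fin n → ℝ) : Fin (n * n) → ℝ :=
  vec n (Matrix.of fun i j => u i * v j)

/-- Standard Gaussian measure on `ι → ℝ`. -/
def stdGaussian (ι : Type*) [Fintype ι] : Measure (ι → ℝ) :=
  Measure.pi fun _ => gaussianReal 0 1

/-- Standard Gaussian measure on `n × n` matrices (as `Fin n → Fin n → ℝ`). -/
def stdGaussianMat (n : ℕ) : Measure (Fin n → Fin n → ℝ) :=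
  Measure.pi fun _ => stdGaussian (Fin n)

/-- Query maps of a deterministic `t`-round adaptive algorithm making `k` linear
measurements per round on inputs in `ℝ^N`. -/
def QueryMaps (N k t : ℕ) : Type :=
  (j : Fin t) → (Fin (j : ℕ) → (Fin k → ℝ)) → Matrix (Fin k) (Fin N) ℝ

namespace QueryMaps

variable {N k t : ℕ}

/-- Restriction of a round-`j` history to the first `i` rounds. -/
def prefixHist {j : Fin t} (h : Fin (j : ℕ) → Fin k → ℝ) {i : Fin t}
    (hij : (i : ℕ) < (j : ℕ)) : Fin (i : ℕ) → Fin k → ℝ :=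
  fun l => h ⟨l.1, l.isLt.trans hij⟩

/-- Validity of query maps: measurability, orthonormal rows within each round, and
orthogonality across rounds along consistent histories. -/
def Valid (Q : QueryMaps N k t) : Prop :=
  (∀ (j : Fin t) (i : Fin k) (l : Fin N), Measurable fun h => Q j h i l) ∧
  (∀ (j : Fin t) (h : Fin (j : ℕ) → Fin k → ℝ), Q j h * (Q j h)ᵀ = 1) ∧
  (∀ (j i : Fin t) (hij : (i : ℕ) < (j : ℕ)) (h : Fin (j : ℕ) → Fin k → ℝ),
      Q j h * (Q i (prefixHist h hij))ᵀ = 0)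

/-- Responses of the algorithm under exact linear measurements of `a`. -/
def resp (Q : QueryMaps N k t) (a : Fin N → ℝ) (j : Fin t) : Fin k → ℝ :=
  (Q j fun i => resp Q a ⟨i.1, i.isLt.trans j.isLt⟩).mulVec a
termination_by (j : ℕ)
decreasing_by exact i.isLt

/-- Responses of the algorithm under noisy linear measurements of `a`, with fresh
per-round noise `g`. -/
def nresp (Q : QueryMaps N k t) (a : Fin N → ℝ) (g : Fin t → Fin k → ℝ) (j : Fin t) :
    Fin k → ℝ :=
  ((Q j fun i => nresp Q a g ⟨i.1, i.isLt.trans j.isLt⟩).mulVec a) + g j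
termination_by (j : ℕ)
decreasing_by exact i.isLt

/-- The `tk × N` matrix stacking all the query matrices realized along the run of the
algorithm on input `a` (exact measurements). -/
def runMat (Q : QueryMaps N k t) (a : Fin N → ℝ) : Matrix (Fin t × Fin k) (Fin N) ℝ :=
  Matrix.of fun p l =>
    Q p.1 (fun i => resp Q a ⟨i.1, i.isLt.trans p.1.isLt⟩) p.2 l

end QueryMaps

/-- Kullback–Leibler divergence, valued in `[0, ∞]`, defined with the natural
logarithm. -/
def klDiv {Ω : Type*} [MeasurableSpace Ω] (P Q : Measure Ω) : ℝ≥0∞ :=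
  if P ≪ Q ∧ Integrable (fun x => Real.log ((P.rnDeriv Q x).toReal)) P then
    ENNReal.ofReal (∫ x, Real.log ((P.rnDeriv Q x).toReal) ∂P)
  else ⊤


/-- The rank-`r` plant `Σ_{i=1}^r uᵢ vᵢᵀ` built from the rows of `U` and `V`. -/
def plant {n r : ℕ} (U V : Fin r → Fin n → ℝ) : Matrix (Fin n) (Fin n) ℝ :=
  Matrix.of fun i j => ∑ l, U l i * V l j

/-- Schatten-`p` norm (real `p`), via the singular values. -/
def schattenNorm {n : ℕ} (p : ℝ) (A : Matrix (Fin n) (Fin n) ℝ) : ℝ :=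
  (∑ i ∈ Finset.range n, singVal A (i + 1) ^ p) ^ (1 / p)

/-- Ky-Fan `p` norm: sum of the `p` largest singular values. -/
def kyFanNorm {n : ℕ} (p : ℕ) (A : Matrix (Fin n) (Fin n) ℝ) : ℝ :=
  ∑ i ∈ Finset.range p, singVal A (i + 1)

namespace SVLB

/-! ### Gaussian measures and the Cameron–Martin formula -/

/-- The standard Gaussian measure on `ι → ℝ`. -/
abbrev gau (ι : Type*) [Fintype ι] : Measure (ι → ℝ) := _root_.stdGaussian ι

instance {ι : Type*} [Fintype ι] : IsProbabilityMeasure (gau ι) := by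
  unfold gau _root_.stdGaussian; infer_instance

instance {ι : Type*} [Fintype ι] : IsProbabilityMeasure (_root_.stdGaussian ι) := by
  unfold _root_.stdGaussian; infer_instance

lemma lintegral_gau_prod {ι : Type*} [Fintype ι] (f : ι → ℝ → ℝ≥0∞) (hf : ∀ i, Measurable (f i)) :
    ∫⁻ x, ∏ i, f i (x i) ∂gau ι = ∏ i, ∫⁻ y, f i y ∂gaussianReal 0 1 := by
  have h := lintegral_prod_eq_prod_lintegral_of_indepFun (μ := gau ι) Finset.univ
    (fun i (x : ι → ℝ) => f i (x i))
    (iIndepFun_pi (μ := fun _ : ι => gaussianReal 0 1) (X := f) fun i => (hf i).aemeasurable)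
    (fun i => (hf i).comp (measurable_pi_apply i))
  rw [h]
  refine Finset.prod_congr rfl fun i _ => ?_
  exact (measurePreserving_eval (fun _ : ι => gaussianReal 0 1) i).lintegral_comp (hf i)

lemma lintegral_exp_mul_gaussianReal (c : ℝ) :
    ∫⁻ y, ENNReal.ofReal (Real.exp (c * y)) ∂gaussianReal 0 1
      = ENNReal.ofReal (Real.exp (c ^ 2 / 2)) := by
  rw [← ofReal_integral_eq_lintegral_ofReal (integrable_exp_mul_gaussianReal c)
    (ae_of_all _ fun _ => (Real.exp_pos _).le)]
  have := congrFun (mgf_fun_id_gaussianReal (μ := 0) (v := 1)) c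
  rw [mgf] at this
  rw [this]; simp

lemma lintegral_exp_dot {ι : Type*} [Fintype ι] (c : ι → ℝ) :
    ∫⁻ x, ENNReal.ofReal (Real.exp (c ⬝ᵥ x)) ∂gau ι
      = ENNReal.ofReal (Real.exp (sqNorm c / 2)) := by
  have h : ∀ x : ι → ℝ, ENNReal.ofReal (Real.exp (c ⬝ᵥ x))
      = ∏ i, ENNReal.ofReal (Real.exp (c i * x i)) := fun x => by
    rw [dotProduct, Real.exp_sum, ENNReal.ofReal_prod_of_nonneg]
    intros; positivity
  simp_rw [h]
  rw [lintegral_gau_prod (fun i y => ENNReal.ofReal (Real.exp (c i * y))) (fun i => by fun_prop)]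
  simp_rw [lintegral_exp_mul_gaussianReal]
  rw [← ENNReal.ofReal_prod_of_nonneg (by intros; positivity), ← Real.exp_sum, sqNorm,
    Finset.sum_div]

lemma integral_cexp_dot {ι : Type*} [Fintype ι] (c : ι → ℝ) :
    ∫ x, Complex.exp (((c ⬝ᵥ x : ℝ) : ℂ) * Complex.I) ∂gau ι
      = Complex.exp (-((sqNorm c : ℝ) : ℂ) / 2) := by
  have h : ∀ x : ι → ℝ, Complex.exp (((c ⬝ᵥ x : ℝ) : ℂ) * Complex.I)
      = ∏ i, Complex.exp (((c i : ℂ) * (x i : ℂ)) * Complex.I) := fun x => by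
    rw [← Complex.exp_sum, dotProduct, ← Finset.sum_mul]; push_cast; rfl
  simp_rw [h]
  have h2 := integral_fintype_prod_eq_prod (𝕜 := ℂ) (μ := fun _ : ι => gaussianReal 0 1)
    (f := fun i (y : ℝ) => Complex.exp (((c i : ℂ) * (y : ℂ)) * Complex.I))
  unfold gau _root_.stdGaussian
  rw [h2]
  have h3 : ∀ i, ∫ y, Complex.exp (((c i : ℂ) * (y : ℂ)) * Complex.I) ∂gaussianReal 0 1
      = Complex.exp (-((c i ^ 2 : ℝ) : ℂ) / 2) := fun i => by
    have := charFun_gaussianReal (μ := 0) (v := 1) (c i)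
    rw [charFun_apply_real] at this
    rw [this]; push_cast; congr 1; simp; ring
  simp_rw [h3]
  rw [← Complex.exp_sum, sqNorm]
  push_cast
  rw [← Finset.sum_div, Finset.sum_neg_distrib]

lemma gaussianReal_eq_withDensity (a : ℝ) :
    gaussianReal a 1 = (gaussianReal 0 1).withDensity
      (fun y => ENNReal.ofReal (Real.exp (a * y - a ^ 2 / 2))) := by
  rw [gaussianReal_of_var_ne_zero _ one_ne_zero, gaussianReal_of_var_ne_zero _ one_ne_zero,
    ← withDensity_mul _ (measurable_gaussianPDF _ _) (by fun_prop)]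
  congr 1
  ext y
  simp only [gaussianPDF, Pi.mul_apply, gaussianPDFReal]
  rw [← ENNReal.ofReal_mul (by positivity), mul_assoc _ (Real.exp _) (Real.exp _),
    ← Real.exp_add]
  congr 3
  simp
  ring

/-- The shifted Gaussian measure has the Cameron–Martin density. -/
lemma map_add_gau {ι : Type*} [Fintype ι] (a : ι → ℝ) :
    (gau ι).map (fun g => a + g) = (gau ι).withDensity
      (fun g => ENNReal.ofReal (Real.exp (a ⬝ᵥ g - sqNorm a / 2))) := by
  have h1 : (gau ι).map (fun g => a + g) = Measure.pi fun i => gaussianReal (a i) 1 := by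
    have := Measure.pi_map_pi (μ := fun _ : ι => gaussianReal 0 1)
      (f := fun i y => a i + y) (fun i => by fun_prop)
    unfold gau _root_.stdGaussian
    simp only [gaussianReal_map_const_add, zero_add] at this
    exact this
  rw [h1]
  refine Measure.pi_eq fun s hs => ?_
  rw [withDensity_apply _ (MeasurableSet.univ_pi hs),
    ← lintegral_indicator (MeasurableSet.univ_pi hs)]
  have h2 : ∀ g : ι → ℝ, (Set.univ.pi s).indicator
      (fun g => ENNReal.ofReal (Real.exp (a ⬝ᵥ g - sqNorm a / 2))) g
      = ∏ i, (s i).indicator (fun y => ENNReal.ofReal (Real.exp (a i * y - a i ^ 2 / 2))) (g i) := by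
    intro g
    by_cases hg : g ∈ Set.univ.pi s
    · rw [Set.indicator_of_mem hg]
      have : ∀ i, (s i).indicator (fun y => ENNReal.ofReal (Real.exp (a i * y - a i ^ 2 / 2))) (g i)
          = ENNReal.ofReal (Real.exp (a i * g i - a i ^ 2 / 2)) := fun i =>
        Set.indicator_of_mem (hg i (Set.mem_univ i)) _
      simp_rw [this]
      rw [← ENNReal.ofReal_prod_of_nonneg (by intros; positivity), ← Real.exp_sum,
        Finset.sum_sub_distrib, ← Finset.sum_div]
      rfl
    · rw [Set.indicator_of_notMem hg]
      simp only [Set.mem_pi, Set.mem_univ, true_implies, not_forall] at hg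
      obtain ⟨i, hi⟩ := hg
      exact (Finset.prod_eq_zero (Finset.mem_univ i) (Set.indicator_of_notMem hi _)).symm
  simp_rw [h2]
  rw [lintegral_gau_prod _ fun i => Measurable.indicator (by fun_prop) (hs i)]
  refine Finset.prod_congr rfl fun i _ => ?_
  rw [lintegral_indicator (hs i), gaussianReal_eq_withDensity (a i), withDensity_apply _ (hs i)]

lemma measurable_dot {ι : Type*} [Fintype ι] (a : ι → ℝ) : Measurable fun g : ι → ℝ => a ⬝ᵥ g := by
  unfold dotProduct; fun_prop

/-- Cameron–Martin formula for the standard Gaussian measure on `ι → ℝ`. -/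
lemma lintegral_gau_add {ι : Type*} [Fintype ι] (a : ι → ℝ) (F : (ι → ℝ) → ℝ≥0∞)
    (hF : Measurable F) :
    ∫⁻ g, F (a + g) ∂gau ι
      = ∫⁻ g, ENNReal.ofReal (Real.exp (a ⬝ᵥ g - sqNorm a / 2)) * F g ∂gau ι := by
  rw [← lintegral_map (f := F) (g := fun g => a + g) hF (by fun_prop), map_add_gau,
    lintegral_withDensity_eq_lintegral_mul _ (by have := measurable_dot a; fun_prop) hF]
  rfl

end SVLB

namespace SVLB

/-! ### Transcripts of adaptive algorithms -/

variable {N k t : ℕ}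

/-- The first `j` rounds of a transcript. -/
abbrev past (x : Fin t → Fin k → ℝ) (j : Fin t) : Fin (j : ℕ) → Fin k → ℝ :=
  fun i => x ⟨i.1, i.isLt.trans j.isLt⟩

/-- Reference measure on transcripts: all responses are independent standard Gaussians. -/
abbrev tg (t k : ℕ) : Measure (Fin t → Fin k → ℝ) := Measure.pi fun _ => gau (Fin k)

/-- A transcript as one long vector. -/
def flat (x : Fin t → Fin k → ℝ) : Fin t × Fin k → ℝ := fun p => x p.1 p.2

/-- All queries issued along the transcript `x`, stacked into one matrix. -/
def stack (Q : QueryMaps N k t) (x : Fin t → Fin k → ℝ) : Matrix (Fin t × Fin k) (Fin N) ℝ :=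
  Matrix.of fun p l => Q p.1 (past x p.1) p.2 l

lemma stack_mulVec (Q : QueryMaps N k t) (x : Fin t → Fin k → ℝ) (a : Fin N → ℝ) (j : Fin t)
    (r : Fin k) : (stack Q x *ᵥ a) (j, r) = (Q j (past x j) *ᵥ a) r := rfl

lemma sqNorm_stack_mulVec (Q : QueryMaps N k t) (x : Fin t → Fin k → ℝ) (a : Fin N → ℝ) :
    sqNorm (stack Q x *ᵥ a) = ∑ j, sqNorm (Q j (past x j) *ᵥ a) := by
  unfold sqNorm
  rw [Fintype.sum_prod_type]
  rfl

lemma stack_dot_flat (Q : QueryMaps N k t) (x : Fin t → Fin k → ℝ) (a : Fin N → ℝ) :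
    (stack Q x *ᵥ a) ⬝ᵥ flat x = ∑ j, (Q j (past x j) *ᵥ a) ⬝ᵥ x j := by
  unfold dotProduct
  rw [Fintype.sum_prod_type]
  rfl

lemma stack_mul_transpose {Q : QueryMaps N k t} (hQ : Q.Valid) (x : Fin t → Fin k → ℝ) :
    stack Q x * (stack Q x)ᵀ = 1 := by
  obtain ⟨-, h1, h2⟩ := hQ
  ext ⟨j, r⟩ ⟨j', r'⟩
  have key : (stack Q x * (stack Q x)ᵀ) (j, r) (j', r')
      = (Q j (past x j) * (Q j' (past x j'))ᵀ) r r' := rfl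
  rw [key]
  rcases lt_trichotomy j j' with h | h | h
  · have := h2 j' j h (past x j')
    have e : QueryMaps.prefixHist (past x j') h = past x j := rfl
    rw [e] at this
    have h3 : Q j (past x j) * (Q j' (past x j'))ᵀ = 0 := by
      rw [← Matrix.transpose_transpose (Q j (past x j) * _), Matrix.transpose_mul,
        Matrix.transpose_transpose, this, Matrix.transpose_zero]
    rw [h3, Matrix.one_apply_ne (by simp [h.ne])]; rfl
  · subst h
    rw [h1 j (past x j)]
    simp [Matrix.one_apply]
  · have := h2 j j' h (past x j)
    have e : QueryMaps.prefixHist (past x j) h = past x j' := rfl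
    rw [e] at this
    rw [this, Matrix.one_apply_ne (by simp [h.ne'])]; rfl

/-- Reconstruction of an input from a transcript `x` and an independent vector `h`:
the component in the span of the issued queries is dictated by `x`, the orthogonal component
is that of `h`. -/
def recon (Q : QueryMaps N k t) (x : Fin t → Fin k → ℝ) (h : Fin N → ℝ) : Fin N → ℝ :=
  (stack Q x)ᵀ *ᵥ flat x + (h - (stack Q x)ᵀ *ᵥ (stack Q x *ᵥ h))

lemma stack_recon {Q : QueryMaps N k t} (hQ : Q.Valid) (x : Fin t → Fin k → ℝ) (h : Fin N → ℝ) :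
    stack Q x *ᵥ recon Q x h = flat x := by
  unfold recon
  rw [Matrix.mulVec_add, Matrix.mulVec_sub, Matrix.mulVec_mulVec, Matrix.mulVec_mulVec,
    stack_mul_transpose hQ]
  simp

/-- Running the algorithm on a reconstructed input gives back the transcript. -/
lemma resp_recon {Q : QueryMaps N k t} (hQ : Q.Valid) (x : Fin t → Fin k → ℝ) (h : Fin N → ℝ) :
    QueryMaps.resp Q (recon Q x h) = x := by
  have main : ∀ (m : ℕ) (hm : m < t), QueryMaps.resp Q (recon Q x h) ⟨m, hm⟩ = x ⟨m, hm⟩ := by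
    intro m
    induction m using Nat.strong_induction_on with
    | _ m ih =>
      intro hm
      rw [QueryMaps.resp]
      have e : (fun i : Fin m => QueryMaps.resp Q (recon Q x h) ⟨i.1, i.isLt.trans hm⟩)
          = past x ⟨m, hm⟩ := by
        funext i; exact ih i.1 i.isLt _
      show (Q ⟨m, hm⟩ (fun i : Fin m => QueryMaps.resp Q (recon Q x h) ⟨i.1, i.isLt.trans hm⟩))
        *ᵥ (recon Q x h) = _
      rw [e]
      funext r
      rw [← stack_mulVec, stack_recon hQ]; rfl
  funext j
  exact main j.1 j.2

lemma sqNorm_eq_dot {ι : Type*} [Fintype ι] (a : ι → ℝ) : sqNorm a = a ⬝ᵥ a := by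
  unfold sqNorm dotProduct; exact Finset.sum_congr rfl fun i _ => sq _

lemma dot_recon (Q : QueryMaps N k t) (x : Fin t → Fin k → ℝ) (h a : Fin N → ℝ) :
    a ⬝ᵥ recon Q x h = (stack Q x *ᵥ a) ⬝ᵥ flat x
      + (a - (stack Q x)ᵀ *ᵥ (stack Q x *ᵥ a)) ⬝ᵥ h := by
  have h1 : a ⬝ᵥ (stack Q x)ᵀ *ᵥ flat x = (stack Q x *ᵥ a) ⬝ᵥ flat x := by
    rw [Matrix.dotProduct_mulVec, Matrix.vecMul_transpose]
  have h2 : a ⬝ᵥ (stack Q x)ᵀ *ᵥ (stack Q x *ᵥ h)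
      = ((stack Q x)ᵀ *ᵥ (stack Q x *ᵥ a)) ⬝ᵥ h := by
    rw [Matrix.dotProduct_mulVec, Matrix.vecMul_transpose, Matrix.dotProduct_mulVec,
      ← Matrix.mulVec_transpose]
  unfold recon
  rw [dotProduct_add, dotProduct_sub, sub_dotProduct, h1, h2]

/-- Pythagoras for the component of `a` orthogonal to all issued queries. -/
lemma sqNorm_perp {Q : QueryMaps N k t} (hQ : Q.Valid) (x : Fin t → Fin k → ℝ) (a : Fin N → ℝ) :
    sqNorm (a - (stack Q x)ᵀ *ᵥ (stack Q x *ᵥ a)) = sqNorm a - sqNorm (stack Q x *ᵥ a) := by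
  set S := stack Q x
  have hS : S * Sᵀ = 1 := stack_mul_transpose hQ x
  have h1 : (Sᵀ *ᵥ (S *ᵥ a)) ⬝ᵥ (Sᵀ *ᵥ (S *ᵥ a)) = (S *ᵥ a) ⬝ᵥ (S *ᵥ a) := by
    conv_lhs => rw [Matrix.dotProduct_mulVec, Matrix.vecMul_transpose, Matrix.mulVec_mulVec, hS,
      Matrix.one_mulVec]
  have h2 : a ⬝ᵥ (Sᵀ *ᵥ (S *ᵥ a)) = (S *ᵥ a) ⬝ᵥ (S *ᵥ a) := by
    rw [Matrix.dotProduct_mulVec, Matrix.vecMul_transpose]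
  rw [sqNorm_eq_dot, sqNorm_eq_dot, sqNorm_eq_dot, sub_dotProduct, dotProduct_sub, dotProduct_sub,
    h1, h2, dotProduct_comm (Sᵀ *ᵥ (S *ᵥ a)) a, h2]
  ring

lemma sqNorm_nonneg {ι : Type*} [Fintype ι] (a : ι → ℝ) : 0 ≤ sqNorm a :=
  Finset.sum_nonneg fun _ _ => sq_nonneg _

lemma sqNorm_stack_le {Q : QueryMaps N k t} (hQ : Q.Valid) (x : Fin t → Fin k → ℝ)
    (a : Fin N → ℝ) : sqNorm (stack Q x *ᵥ a) ≤ sqNorm a := by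
  have := sqNorm_perp hQ x a
  have := sqNorm_nonneg (a - (stack Q x)ᵀ *ᵥ (stack Q x *ᵥ a))
  linarith

lemma measurable_past (j : Fin t) : Measurable fun x : Fin t → Fin k → ℝ => past x j := by
  unfold past; fun_prop

lemma measurable_query {Q : QueryMaps N k t} (hQ : Q.Valid) (j : Fin t) (a : Fin N → ℝ) :
    Measurable fun h => Q j h *ᵥ a := by
  refine measurable_pi_lambda _ fun r => ?_
  simp only [Matrix.mulVec, dotProduct]
  exact Finset.measurable_sum _ fun l _ => (hQ.1 j r l).mul_const _

lemma measurable_stack_apply {Q : QueryMaps N k t} (hQ : Q.Valid) (p : Fin t × Fin k)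
    (l : Fin N) : Measurable fun x => stack Q x p l :=
  (hQ.1 p.1 p.2 l).comp (measurable_past p.1)

lemma measurable_stack_mulVec {Q : QueryMaps N k t} (hQ : Q.Valid) (a : Fin N → ℝ) :
    Measurable fun x => stack Q x *ᵥ a := by
  refine measurable_pi_lambda _ fun p => ?_
  simp only [Matrix.mulVec, dotProduct]
  exact Finset.measurable_sum _ fun l _ => (measurable_stack_apply hQ p l).mul_const _

lemma measurable_recon {Q : QueryMaps N k t} (hQ : Q.Valid) :
    Measurable fun p : (Fin t → Fin k → ℝ) × (Fin N → ℝ) => recon Q p.1 p.2 := by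
  have hS : ∀ p l, Measurable fun z : (Fin t → Fin k → ℝ) × (Fin N → ℝ) => stack Q z.1 p l :=
    fun p l => (measurable_stack_apply hQ p l).comp measurable_fst
  refine measurable_pi_lambda _ fun l => ?_
  simp only [recon, Pi.add_apply, Pi.sub_apply, Matrix.mulVec, dotProduct, flat,
    Matrix.transpose_apply]
  fun_prop

lemma measurable_sqNorm {ι : Type*} [Fintype ι] : Measurable fun a : ι → ℝ => sqNorm a := by
  unfold sqNorm; fun_prop

/-- One factor of the complex exponential martingale attached to the drift vector `c`. -/
def cfac (c y : Fin k → ℝ) : ℂ :=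
  Complex.exp (((c ⬝ᵥ y : ℝ) : ℂ) * Complex.I + ((sqNorm c : ℝ) : ℂ) / 2)

lemma norm_cfac (c y : Fin k → ℝ) : ‖cfac c y‖ = Real.exp (sqNorm c / 2) := by
  rw [cfac, Complex.norm_exp]; simp

lemma integral_cfac (c : Fin k → ℝ) : ∫ y, cfac c y ∂gau (Fin k) = 1 := by
  simp only [cfac, Complex.exp_add]
  rw [integral_mul_const, integral_cexp_dot, ← Complex.exp_add]
  simp [neg_div]

lemma measurable_cfac_comp {α : Type*} [MeasurableSpace α] {f g : α → Fin k → ℝ}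
    (hf : Measurable f) (hg : Measurable g) : Measurable fun z => cfac (f z) (g z) := by
  unfold cfac dotProduct sqNorm
  fun_prop

/-- The product of the exponential martingale factors of an adapted, bounded drift field has
mean one. -/
lemma integral_prod_cfac (K : ℝ) : ∀ (t : ℕ)
    (m : (j : Fin t) → (Fin (j : ℕ) → Fin k → ℝ) → (Fin k → ℝ)),
    (∀ j, Measurable (m j)) → (∀ j h, sqNorm (m j h) ≤ K) →
    ∫ x, ∏ j, cfac (m j (past x j)) (x j) ∂tg t k = 1 := by
  intro t
  induction t with
  | zero => intro m _ _; simp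
  | succ t ih =>
    intro m hm hb
    have hmp := measurePreserving_piFinSuccAbove (n := t) (α := fun _ => Fin k → ℝ)
      (fun _ => gau (Fin k)) (Fin.last t)
    let e := MeasurableEquiv.piFinSuccAbove (fun _ : Fin (t + 1) => Fin k → ℝ) (Fin.last t)
    obtain ⟨m', hm_eq⟩ : ∃ m' : (j : Fin t) → (Fin (j : ℕ) → Fin k → ℝ) → (Fin k → ℝ),
      m' = fun j : Fin t => m j.castSucc := ⟨fun j : Fin t => m j.castSucc, rfl⟩
    obtain ⟨ml, hml_eq⟩ : ∃ ml : (Fin t → Fin k → ℝ) → (Fin k → ℝ), ml = m (Fin.last t) :=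
      ⟨_, rfl⟩
    have hm' : ∀ j, Measurable (m' j) := fun j => by rw [hm_eq]; exact hm _
    have hml : Measurable ml := by rw [hml_eq]; exact hm _
    have hb' : ∀ j h, sqNorm (m' j h) ≤ K := fun j h => by rw [hm_eq]; exact hb _ _
    have hbl : ∀ h, sqNorm (ml h) ≤ K := fun h => by rw [hml_eq]; exact hb _ _
    let f : (Fin k → ℝ) × (Fin t → Fin k → ℝ) → ℂ := fun z =>
      (∏ j : Fin t, cfac (m' j (past z.2 j)) (z.2 j)) * cfac (ml z.2) z.1
    have hfe : ∀ x : Fin (t + 1) → Fin k → ℝ,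
        ∏ j, cfac (m j (past x j)) (x j) = f (e x) := by
      intro x
      rw [Fin.prod_univ_castSucc]
      have e1 : (e x).1 = x (Fin.last t) := rfl
      have e2 : (e x).2 = fun j : Fin t => x j.castSucc := by
        funext j
        show x ((Fin.last t).succAbove j) = _
        rw [Fin.succAbove_last]
      simp only [f, e1, e2, hm_eq, hml_eq]
      rfl
    have hm_eqas : Measurable f := by
      refine Measurable.mul (Finset.measurable_prod _ fun j _ => ?_) ?_
      · have a1 : Measurable fun z : (Fin k → ℝ) × (Fin t → Fin k → ℝ) => past z.2 j :=
          (measurable_past j).comp measurable_snd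
        have a2 : Measurable fun z : (Fin k → ℝ) × (Fin t → Fin k → ℝ) => m' j (past z.2 j) :=
          (hm' j).comp a1
        have a3 : Measurable fun z : (Fin k → ℝ) × (Fin t → Fin k → ℝ) => z.2 j :=
          (measurable_pi_apply j).comp measurable_snd
        exact measurable_cfac_comp a2 a3
      · have a4 : Measurable fun z : (Fin k → ℝ) × (Fin t → Fin k → ℝ) => ml z.2 :=
          hml.comp measurable_snd
        exact measurable_cfac_comp a4 measurable_fst
    have hintg : Integrable f ((gau (Fin k)).prod (tg t k)) := by
      refine Integrable.of_bound hm_eqas.aestronglyMeasurable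
        ((∏ j : Fin t, Real.exp (K / 2)) * Real.exp (K / 2)) (ae_of_all _ fun z => ?_)
      simp only [f, norm_mul, norm_prod, norm_cfac]
      gcongr
      · exact hb' _ _
      · exact hbl _
    calc ∫ x, ∏ j, cfac (m j (past x j)) (x j) ∂tg (t + 1) k
        = ∫ x, f (e x) ∂tg (t + 1) k := by simp_rw [hfe]
      _ = ∫ z, f z ∂((gau (Fin k)).prod (tg t k)) :=
          hmp.integral_comp e.measurableEmbedding f
      _ = ∫ x, ∫ y, f (y, x) ∂gau (Fin k) ∂tg t k := integral_prod_symm f hintg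
      _ = ∫ x, ∏ j, cfac (m' j (past x j)) (x j) ∂tg t k := by
          congr 1; funext x
          simp only [f]
          rw [integral_const_mul, integral_cfac, mul_one]
      _ = 1 := ih m' hm' hb'

/-- A standard Gaussian input can be generated from i.i.d. Gaussian responses and an independent
Gaussian vector. -/
lemma map_recon {Q : QueryMaps N k t} (hQ : Q.Valid) :
    ((tg t k).prod (gau (Fin N))).map (fun p => recon Q p.1 p.2) = gau (Fin N) := by
  have hmr := measurable_recon hQ
  have : IsProbabilityMeasure (((tg t k).prod (gau (Fin N))).map fun p => recon Q p.1 p.2) :=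
    Measure.isProbabilityMeasure_map hmr.aemeasurable
  apply Measure.ext_of_charFunDual
  ext L
  set ξ : Fin N → ℝ := fun l => L (Pi.single l 1) with hξ
  have hL : ∀ g : Fin N → ℝ, L g = ξ ⬝ᵥ g := fun g => by
    conv_lhs => rw [pi_eq_sum_univ' g]
    simp only [map_sum, dotProduct, hξ, map_smul, smul_eq_mul]
    exact Finset.sum_congr rfl fun i _ => by rw [mul_comm]
  rw [charFunDual_apply, charFunDual_apply]
  simp_rw [hL]
  rw [integral_cexp_dot, integral_map hmr.aemeasurable (by
    have := measurable_dot ξ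
    exact Measurable.aestronglyMeasurable (by fun_prop))]
  have hintg : Integrable (fun p : (Fin t → Fin k → ℝ) × (Fin N → ℝ) =>
      Complex.exp (((ξ ⬝ᵥ recon Q p.1 p.2 : ℝ) : ℂ) * Complex.I))
      ((tg t k).prod (gau (Fin N))) := by
    refine Integrable.of_bound (Measurable.aestronglyMeasurable ?_) 1 (ae_of_all _ fun z => ?_)
    · have := (measurable_dot ξ).comp hmr
      simp only [Function.comp_def] at this
      fun_prop
    · rw [Complex.norm_exp_ofReal_mul_I]
  rw [integral_prod _ hintg]
  have hin : ∀ x : Fin t → Fin k → ℝ,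
      ∫ h, Complex.exp (((ξ ⬝ᵥ recon Q x h : ℝ) : ℂ) * Complex.I) ∂gau (Fin N)
      = Complex.exp (-((sqNorm ξ : ℝ) : ℂ) / 2)
        * ∏ j, cfac (Q j (past x j) *ᵥ ξ) (x j) := by
    intro x
    simp_rw [dot_recon, Complex.ofReal_add, add_mul, Complex.exp_add]
    rw [integral_const_mul, integral_cexp_dot, sqNorm_perp hQ]
    simp only [cfac]
    rw [← Complex.exp_sum, ← Complex.exp_add, ← Complex.exp_add, stack_dot_flat,
      sqNorm_stack_mulVec, Finset.sum_add_distrib, ← Finset.sum_mul, ← Finset.sum_div]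
    congr 1
    push_cast
    ring
  simp_rw [hin]
  rw [integral_const_mul, integral_prod_cfac (sqNorm ξ) t (fun j h => Q j h *ᵥ ξ)
    (fun j => measurable_query hQ j ξ) ?_, mul_one]
  intro j h
  -- every history extends to a full transcript, so the stacked bound applies
  set x : Fin t → Fin k → ℝ := fun i => if hi : (i : ℕ) < j then h ⟨i, hi⟩ else 0
  have hx : past x j = h := by
    funext i
    show (if hi : (i : ℕ) < (j : ℕ) then h ⟨i, hi⟩ else 0) = h i
    rw [dif_pos i.isLt]
  have h1 := sqNorm_stack_le hQ x ξ
  rw [sqNorm_stack_mulVec] at h1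
  have h2 := Finset.single_le_sum (f := fun j => sqNorm (Q j (past x j) *ᵥ ξ))
    (fun i _ => sqNorm_nonneg _) (Finset.mem_univ j)
  simp only [hx] at h2
  linarith

/-- Density, with respect to i.i.d. Gaussian responses, of the transcript on an input with mean
`a` and standard Gaussian noise. -/
def dens (Q : QueryMaps N k t) (a : Fin N → ℝ) (x : Fin t → Fin k → ℝ) : ℝ :=
  Real.exp ((stack Q x *ᵥ a) ⬝ᵥ flat x - sqNorm (stack Q x *ᵥ a) / 2)

lemma dens_nonneg (Q : QueryMaps N k t) (a : Fin N → ℝ) (x : Fin t → Fin k → ℝ) :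
    0 ≤ dens Q a x := (Real.exp_pos _).le

lemma measurable_dens {Q : QueryMaps N k t} (hQ : Q.Valid) (a : Fin N → ℝ) :
    Measurable (dens Q a) := by
  have := measurable_stack_mulVec hQ a
  have h2 : Measurable fun x : Fin t → Fin k → ℝ => flat x :=
    measurable_pi_lambda _ fun p => by unfold flat; fun_prop
  have h3 := measurable_sqNorm.comp this
  simp only [Function.comp_def] at h3
  unfold dens dotProduct
  fun_prop

/-- Joint measurability of the responses, in the input and in a parameter of the query maps. -/
lemma measurable_resp {Ω : Type*} [MeasurableSpace Ω] (Qf : Ω → QueryMaps N k t)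
    (hQ : ∀ (j : Fin t) (i' : Fin k) (l : Fin N),
      Measurable fun p : Ω × (Fin (j : ℕ) → Fin k → ℝ) => Qf p.1 j p.2 i' l) :
    Measurable fun p : Ω × (Fin N → ℝ) => QueryMaps.resp (Qf p.1) p.2 := by
  have main : ∀ (m : ℕ) (hm : m < t),
      Measurable fun p : Ω × (Fin N → ℝ) => QueryMaps.resp (Qf p.1) p.2 ⟨m, hm⟩ := by
    intro m
    induction m using Nat.strong_induction_on with
    | _ m ih =>
      intro hm
      have h1 : Measurable fun p : Ω × (Fin N → ℝ) =>
          (fun i : Fin m => QueryMaps.resp (Qf p.1) p.2 ⟨i.1, i.isLt.trans hm⟩) :=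
        measurable_pi_lambda _ fun i => ih i.1 i.isLt _
      have h2 : (fun p : Ω × (Fin N → ℝ) => QueryMaps.resp (Qf p.1) p.2 ⟨m, hm⟩)
          = fun p r => ∑ l, Qf p.1 ⟨m, hm⟩
            (fun i : Fin m => QueryMaps.resp (Qf p.1) p.2 ⟨i.1, i.isLt.trans hm⟩) r l * p.2 l := by
        funext p; rw [QueryMaps.resp]; rfl
      rw [h2]
      refine measurable_pi_lambda _ fun r => Finset.measurable_sum _ fun l _ => ?_
      refine Measurable.mul ?_ (by fun_prop)
      exact (hQ ⟨m, hm⟩ r l).comp (measurable_fst.prodMk h1)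
  exact measurable_pi_lambda _ fun j => main j.1 j.2

lemma measurable_resp_fixed {Q : QueryMaps N k t} (hQ : Q.Valid) :
    Measurable fun a : Fin N → ℝ => QueryMaps.resp Q a := by
  have := measurable_resp (Ω := Unit) (fun _ => Q)
    (fun j i' l => (hQ.1 j i' l).comp measurable_snd)
  exact this.comp (measurable_const (a := ()) |>.prodMk measurable_id)

/-- The transcript on the input `a + g` with `g` standard Gaussian has density `dens Q a`. -/
lemma lintegral_resp {Q : QueryMaps N k t} (hQ : Q.Valid) (a : Fin N → ℝ)
    (F : (Fin t → Fin k → ℝ) → ℝ≥0∞) (hF : Measurable F) :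
    ∫⁻ g, F (QueryMaps.resp Q (a + g)) ∂gau (Fin N)
      = ∫⁻ x, ENNReal.ofReal (dens Q a x) * F x ∂tg t k := by
  have hr := measurable_resp_fixed hQ
  have hmr := measurable_recon hQ
  rw [lintegral_gau_add a (fun g => F (QueryMaps.resp Q g)) (hF.comp hr)]
  have hm1 : Measurable fun g : Fin N → ℝ =>
      ENNReal.ofReal (Real.exp (a ⬝ᵥ g - sqNorm a / 2)) * F (QueryMaps.resp Q g) := by
    have := measurable_dot a
    have := hF.comp hr
    simp only [Function.comp_def] at this
    fun_prop
  conv_lhs => rw [← map_recon hQ]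
  have hm2 : Measurable fun p : (Fin t → Fin k → ℝ) × (Fin N → ℝ) =>
      ENNReal.ofReal (Real.exp (a ⬝ᵥ recon Q p.1 p.2 - sqNorm a / 2))
        * F (QueryMaps.resp Q (recon Q p.1 p.2)) := hm1.comp hmr
  rw [lintegral_map hm1 hmr, lintegral_prod _ hm2.aemeasurable]
  refine lintegral_congr fun x => ?_
  simp_rw [resp_recon hQ]
  have hd := measurable_dot (a - (stack Q x)ᵀ *ᵥ (stack Q x *ᵥ a))
  rw [lintegral_mul_const _ (by
    have := (measurable_dot a).comp (hmr.comp (measurable_const (a := x) |>.prodMk measurable_id))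
    simp only [Function.comp_def, id] at this
    fun_prop)]
  congr 1
  simp_rw [dot_recon]
  have : ∀ h, ENNReal.ofReal (Real.exp ((stack Q x *ᵥ a) ⬝ᵥ flat x
      + (a - (stack Q x)ᵀ *ᵥ (stack Q x *ᵥ a)) ⬝ᵥ h - sqNorm a / 2))
      = ENNReal.ofReal (Real.exp ((stack Q x *ᵥ a) ⬝ᵥ flat x - sqNorm a / 2))
        * ENNReal.ofReal (Real.exp ((a - (stack Q x)ᵀ *ᵥ (stack Q x *ᵥ a)) ⬝ᵥ h)) := fun h => by
    rw [← ENNReal.ofReal_mul (by positivity), ← Real.exp_add]; congr 2; ring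
  simp_rw [this]
  rw [lintegral_const_mul _ (by fun_prop), lintegral_exp_dot, ← ENNReal.ofReal_mul (by positivity),
    ← Real.exp_add, sqNorm_perp hQ, dens]
  congr 2; ring

/-- Change of measure: on an event where the plant `w` is seen by the queries with squared mass at
most `T`, planted probabilities are controlled by null probabilities. -/
lemma change_of_measure {Q : QueryMaps N k t} (hQ : Q.Valid) (a w : Fin N → ℝ) (s T y : ℝ)
    (B : Set (Fin t → Fin k → ℝ)) (hB : MeasurableSet B)
    (hT : ∀ x ∈ B, sqNorm (stack Q x *ᵥ w) ≤ T) :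
    gau (Fin N) {g | QueryMaps.resp Q (a + s • w + g) ∈ B}
      ≤ ENNReal.ofReal (Real.exp (-y)) + ENNReal.ofReal (Real.exp (s ^ 2 * T + y))
        * gau (Fin N) {g | QueryMaps.resp Q (a + g) ∈ B} := by
  have hr := measurable_resp_fixed hQ
  have hind : Measurable (B.indicator (fun _ => (1 : ℝ≥0∞))) := measurable_one.indicator hB
  have hP : ∀ b : Fin N → ℝ, gau (Fin N) {g | QueryMaps.resp Q (b + g) ∈ B}
      = ∫⁻ x, ENNReal.ofReal (dens Q b x) * B.indicator (fun _ => (1 : ℝ≥0∞)) x ∂tg t k := by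
    intro b
    rw [← lintegral_resp hQ b _ hind]
    have hm : MeasurableSet {g | QueryMaps.resp Q (b + g) ∈ B} :=
      (hr.comp (measurable_const_add b)) hB
    rw [← lintegral_indicator_one hm]
    rfl
  have h1 : ∫⁻ x, ENNReal.ofReal (dens Q (a + (2 * s) • w) x) ∂tg t k = 1 := by
    have := lintegral_resp hQ (a + (2 * s) • w) (fun _ => 1) measurable_one
    simpa using this.symm
  rw [hP, hP]
  have hpt : ∀ x, ENNReal.ofReal (dens Q (a + s • w) x) * B.indicator (fun _ => (1 : ℝ≥0∞)) x
      ≤ ENNReal.ofReal (Real.exp (-y)) * ENNReal.ofReal (dens Q (a + (2 * s) • w) x)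
        + ENNReal.ofReal (Real.exp (s ^ 2 * T + y))
          * (ENNReal.ofReal (dens Q a x) * B.indicator (fun _ => (1 : ℝ≥0∞)) x) := by
    intro x
    by_cases hx : x ∈ B
    swap
    · simp [hx]
    rw [Set.indicator_of_mem hx, mul_one, mul_one, ← ENNReal.ofReal_mul (by positivity),
      ← ENNReal.ofReal_mul (by positivity), ← ENNReal.ofReal_add
        (mul_nonneg (Real.exp_pos _).le (dens_nonneg _ _ _))
        (mul_nonneg (Real.exp_pos _).le (dens_nonneg _ _ _))]
    refine ENNReal.ofReal_le_ofReal ?_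
    have hTx := hT x hx
    simp only [dens, ← Real.exp_add, Matrix.mulVec_add, Matrix.mulVec_smul, add_dotProduct,
      smul_dotProduct, smul_eq_mul, sqNorm_eq_dot, dotProduct_add, dotProduct_smul] at hTx ⊢
    set S := stack Q x
    set p := (S *ᵥ a) ⬝ᵥ flat x
    set r := (S *ᵥ w) ⬝ᵥ flat x
    set α := (S *ᵥ a) ⬝ᵥ (S *ᵥ a)
    set β := (S *ᵥ w) ⬝ᵥ (S *ᵥ w)
    rw [dotProduct_comm (S *ᵥ w) (S *ᵥ a)]
    set c := (S *ᵥ a) ⬝ᵥ (S *ᵥ w)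
    -- twice the log-density for the shift `s` exceeds the sum of the log-densities for the
    -- shifts `0` and `2 s` by exactly `s ^ 2 * β`
    have hs : s ^ 2 * β ≤ s ^ 2 * T := mul_le_mul_of_nonneg_left hTx (sq_nonneg s)
    rcases le_total (p + s * r - (α + s * c + s * (c + s * β)) / 2)
      (-y + (p + 2 * s * r - (α + 2 * s * c + 2 * s * (c + 2 * s * β)) / 2)) with h | h
    · exact (Real.exp_le_exp.2 (by linarith)).trans
        (le_add_of_nonneg_right (Real.exp_pos _).le)
    · exact (Real.exp_le_exp.2 (by nlinarith)).trans
        (le_add_of_nonneg_left (Real.exp_pos _).le)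
  refine (lintegral_mono hpt).trans ?_
  have hd1 := measurable_dens hQ (a + (2 * s) • w)
  have hd2 := measurable_dens hQ a
  rw [lintegral_add_left (by fun_prop), lintegral_const_mul _ (by fun_prop), h1, mul_one,
    lintegral_const_mul _ (by fun_prop)]

end SVLB

namespace SVLB

/-! ### Quadratic exponential moments -/

lemma frobSq_nonneg {κ ι : Type*} [Fintype κ] [Fintype ι] (B : Matrix κ ι ℝ) : 0 ≤ frobSq B :=
  Finset.sum_nonneg fun _ _ => Finset.sum_nonneg fun _ _ => sq_nonneg _

lemma exists_orthogonal_diag {κ : Type*} [Fintype κ] [DecidableEq κ]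
    (M : Matrix κ κ ℝ) (hM : Mᵀ = M) :
    ∃ (U : Matrix κ κ ℝ) (d : κ → ℝ), U * Uᵀ = 1 ∧ Uᵀ * U = 1 ∧ M = U * diagonal d * Uᵀ := by
  have hA : M.IsHermitian := by rw [Matrix.IsHermitian, conjTranspose_eq_transpose_of_trivial, hM]
  have h1 := hA.spectral_theorem
  rw [Unitary.conjStarAlgAut_apply] at h1
  refine ⟨hA.eigenvectorUnitary, hA.eigenvalues, ?_, ?_, ?_⟩
  · have := Unitary.coe_mul_star_self hA.eigenvectorUnitary
    rwa [Unitary.coe_star, star_eq_conjTranspose, conjTranspose_eq_transpose_of_trivial] at this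
  · have := Unitary.coe_star_mul_self hA.eigenvectorUnitary
    rwa [star_eq_conjTranspose, conjTranspose_eq_transpose_of_trivial] at this
  · rw [star_eq_conjTranspose, conjTranspose_eq_transpose_of_trivial] at h1
    exact h1

lemma sqNorm_transpose_mulVec {κ ι : Type*} [Fintype κ] [DecidableEq κ] [Fintype ι]
    (S : Matrix κ ι ℝ) (hS : S * Sᵀ = 1) (x : κ → ℝ) : sqNorm (Sᵀ *ᵥ x) = sqNorm x := by
  rw [sqNorm_eq_dot, sqNorm_eq_dot, Matrix.dotProduct_mulVec, Matrix.vecMul_transpose,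
    Matrix.mulVec_mulVec, hS, Matrix.one_mulVec]

lemma dot_sq_le {ι : Type*} [Fintype ι] (x y : ι → ℝ) : (x ⬝ᵥ y) ^ 2 ≤ sqNorm x * sqNorm y :=
  Finset.sum_mul_sq_le_sq_mul_sq _ _ _

lemma sqNorm_transpose_le {κ ι : Type*} [Fintype κ] [Fintype ι] (B : Matrix κ ι ℝ) (β : ℝ)
    (hβ : 0 ≤ β) (hB : ∀ x, sqNorm (B *ᵥ x) ≤ β * sqNorm x) (y : κ → ℝ) :
    sqNorm (Bᵀ *ᵥ y) ≤ β * sqNorm y := by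
  have h1 : sqNorm (Bᵀ *ᵥ y) = y ⬝ᵥ (B *ᵥ (Bᵀ *ᵥ y)) := by
    rw [sqNorm_eq_dot, Matrix.dotProduct_mulVec y, ← Matrix.mulVec_transpose]
  have h2 := dot_sq_le y (B *ᵥ (Bᵀ *ᵥ y))
  rw [← h1] at h2
  have h3 := hB (Bᵀ *ᵥ y)
  have h4 := sqNorm_nonneg (Bᵀ *ᵥ y)
  have h5 := sqNorm_nonneg y
  have h6 : sqNorm (Bᵀ *ᵥ y) ^ 2 ≤ sqNorm y * (β * sqNorm (Bᵀ *ᵥ y)) :=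
    h2.trans (mul_le_mul_of_nonneg_left h3 h5)
  rcases h4.eq_or_lt with h | h
  · rw [← h]; positivity
  · have : sqNorm (Bᵀ *ᵥ y) * sqNorm (Bᵀ *ᵥ y) ≤ (β * sqNorm y) * sqNorm (Bᵀ *ᵥ y) := by nlinarith
    exact le_of_mul_le_mul_right this h

lemma sqNorm_mulVec_le_of_orth {κ ι : Type*} [Fintype κ] [DecidableEq κ] [Fintype ι]
    (S : Matrix κ ι ℝ) (hS : S * Sᵀ = 1) (x : ι → ℝ) : sqNorm (S *ᵥ x) ≤ sqNorm x := by
  have := sqNorm_transpose_le Sᵀ 1 zero_le_one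
    (fun y => by rw [sqNorm_transpose_mulVec S hS, one_mul]) x
  simpa using this

/-- Rotation invariance of the standard Gaussian measure. -/
lemma map_orth_gau {κ : Type*} [Fintype κ] [DecidableEq κ] (U : Matrix κ κ ℝ) (hU : U * Uᵀ = 1) :
    (gau κ).map (fun g => U *ᵥ g) = gau κ := by
  have hm : Measurable fun g : κ → ℝ => U *ᵥ g := by
    unfold mulVec dotProduct; fun_prop
  have : IsProbabilityMeasure ((gau κ).map fun g => U *ᵥ g) :=
    Measure.isProbabilityMeasure_map hm.aemeasurable
  apply Measure.ext_of_charFunDual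
  ext L
  set ξ : κ → ℝ := fun l => L (Pi.single l 1) with hξ
  have hL : ∀ g : κ → ℝ, L g = ξ ⬝ᵥ g := fun g => by
    conv_lhs => rw [pi_eq_sum_univ' g]
    simp only [map_sum, dotProduct, hξ, map_smul, smul_eq_mul]
    exact Finset.sum_congr rfl fun i _ => by rw [mul_comm]
  rw [charFunDual_apply, charFunDual_apply]
  simp_rw [hL]
  rw [integral_cexp_dot, integral_map hm.aemeasurable (by
    have := measurable_dot ξ
    exact Measurable.aestronglyMeasurable (by fun_prop))]
  have h2 : ∀ g, ξ ⬝ᵥ U *ᵥ g = (Uᵀ *ᵥ ξ) ⬝ᵥ g := fun g => by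
    rw [Matrix.dotProduct_mulVec, ← Matrix.mulVec_transpose]
  simp_rw [h2]
  rw [integral_cexp_dot, sqNorm_transpose_mulVec U hU]

lemma lintegral_exp_sq_gaussianReal (x : ℝ) (h0 : 0 ≤ x) (hx : x ≤ 1 / 4) :
    ∫⁻ y, ENNReal.ofReal (Real.exp (x * y ^ 2)) ∂gaussianReal 0 1
      ≤ ENNReal.ofReal (Real.exp (2 * x)) := by
  rw [gaussianReal_of_var_ne_zero _ one_ne_zero,
    lintegral_withDensity_eq_lintegral_mul _ (measurable_gaussianPDF _ _) (by fun_prop)]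
  have hb : 0 < 1 / 2 - x := by linarith
  have h1 : ∀ y : ℝ, (gaussianPDF 0 1 * fun y => ENNReal.ofReal (Real.exp (x * y ^ 2))) y
      = ENNReal.ofReal ((√(2 * Real.pi))⁻¹ * Real.exp (-(1 / 2 - x) * y ^ 2)) := by
    intro y
    rw [Pi.mul_apply, gaussianPDF, gaussianPDFReal, ← ENNReal.ofReal_mul (by positivity), mul_assoc,
      ← Real.exp_add]
    congr 3
    · simp
    · push_cast; ring_nf
  simp_rw [h1]
  rw [← ofReal_integral_eq_lintegral_ofReal ((integrable_exp_neg_mul_sq hb).const_mul _)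
    (ae_of_all _ fun _ => by positivity), integral_const_mul, integral_gaussian]
  refine ENNReal.ofReal_le_ofReal ?_
  rw [← Real.sqrt_inv, ← Real.sqrt_mul (by positivity)]
  refine Real.sqrt_le_iff.2 ⟨(Real.exp_pos _).le, ?_⟩
  have h2 : (2 * Real.pi)⁻¹ * (Real.pi / (1 / 2 - x)) = (1 - 2 * x)⁻¹ := by
    have : (1 - 2 * x) ≠ 0 := by linarith
    have := Real.pi_ne_zero
    have := hb.ne'
    field_simp
  rw [h2, ← Real.exp_nat_mul]
  have h3 : 1 + 4 * x ≤ Real.exp (((2 : ℕ) : ℝ) * (2 * x)) := by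
    have := Real.add_one_le_exp (((2 : ℕ) : ℝ) * (2 * x)); push_cast at this ⊢; linarith
  refine le_trans ?_ h3
  rw [inv_le_iff_one_le_mul₀ (by linarith)]
  nlinarith

/-- Exponential moment of a Gaussian quadratic form, by diagonalization. -/
lemma lintegral_exp_quad {κ ι : Type*} [Fintype κ] [Fintype ι] (B : Matrix κ ι ℝ) (β lam : ℝ)
    (hlam : 0 ≤ lam) (hl : lam * β ≤ 1 / 4) (hB : ∀ y, sqNorm (Bᵀ *ᵥ y) ≤ β * sqNorm y) :
    ∫⁻ g, ENNReal.ofReal (Real.exp (lam * sqNorm (Bᵀ *ᵥ g))) ∂gau κ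
      ≤ ENNReal.ofReal (Real.exp (2 * lam * frobSq B)) := by
  obtain ⟨U, d, hU1, hU2, hM⟩ := exists_orthogonal_diag (B * Bᵀ)
    (by rw [Matrix.transpose_mul, Matrix.transpose_transpose])
  have hq : ∀ g, sqNorm (Bᵀ *ᵥ (U *ᵥ g)) = ∑ i, d i * g i ^ 2 := by
    intro g
    have e1 : sqNorm (Bᵀ *ᵥ (U *ᵥ g)) = (U *ᵥ g) ⬝ᵥ ((B * Bᵀ) *ᵥ (U *ᵥ g)) := by
      rw [sqNorm_eq_dot, ← Matrix.mulVec_mulVec, Matrix.dotProduct_mulVec (U *ᵥ g),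
        ← Matrix.mulVec_transpose]
    rw [e1, hM, Matrix.mulVec_mulVec, mul_assoc, hU2, mul_one, ← Matrix.mulVec_mulVec,
      Matrix.dotProduct_mulVec, ← Matrix.mulVec_transpose, Matrix.mulVec_mulVec, hU2,
      Matrix.one_mulVec, dotProduct]
    refine Finset.sum_congr rfl fun i _ => ?_
    rw [Matrix.mulVec_diagonal]; ring
  have hd : ∀ i, 0 ≤ d i ∧ d i ≤ β := by
    intro i
    have h1 := hq (Pi.single i 1)
    have h2 : ∑ j, d j * (Pi.single i 1 : κ → ℝ) j ^ 2 = d i := by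
      rw [Finset.sum_eq_single i] <;> simp +contextual
    rw [h2] at h1
    have h3 := hB (U *ᵥ Pi.single i 1)
    have h4 : sqNorm (U *ᵥ Pi.single i 1) = 1 := by
      have := sqNorm_transpose_mulVec Uᵀ (by rw [Matrix.transpose_transpose, hU2]) (Pi.single i 1)
      rw [Matrix.transpose_transpose] at this
      rw [this, sqNorm, Finset.sum_eq_single i] <;> simp +contextual
    rw [h1, h4, mul_one] at h3
    exact ⟨h1 ▸ sqNorm_nonneg _, h3⟩
  have htr : ∑ i, d i = frobSq B := by
    have h1 : (B * Bᵀ).trace = ∑ i, d i := by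
      rw [hM, Matrix.trace_mul_comm, ← mul_assoc, hU2, one_mul, Matrix.trace_diagonal]
    rw [← h1, frobSq, Matrix.trace]
    refine Finset.sum_congr rfl fun i _ => ?_
    rw [Matrix.diag_apply, Matrix.mul_apply]
    exact Finset.sum_congr rfl fun j _ => by rw [Matrix.transpose_apply, sq]
  have hm : Measurable fun g : κ → ℝ => ENNReal.ofReal (Real.exp (lam * sqNorm (Bᵀ *ᵥ g))) := by
    unfold sqNorm mulVec dotProduct; fun_prop
  have hmU : Measurable fun g : κ → ℝ => U *ᵥ g := by
    unfold mulVec dotProduct; fun_prop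
  conv_lhs => rw [← map_orth_gau U hU1]
  rw [lintegral_map hm hmU]
  simp_rw [hq]
  have h : ∀ g : κ → ℝ, ENNReal.ofReal (Real.exp (lam * ∑ i, d i * g i ^ 2))
      = ∏ i, ENNReal.ofReal (Real.exp (lam * d i * g i ^ 2)) := fun g => by
    rw [Finset.mul_sum, Real.exp_sum, ENNReal.ofReal_prod_of_nonneg (by intros; positivity)]
    simp_rw [mul_assoc]
  simp_rw [h]
  rw [lintegral_gau_prod (fun i y => ENNReal.ofReal (Real.exp (lam * d i * y ^ 2)))
    (fun i => by fun_prop)]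
  calc _ ≤ ∏ i, ENNReal.ofReal (Real.exp (2 * (lam * d i))) :=
        Finset.prod_le_prod' fun i _ => lintegral_exp_sq_gaussianReal _
          (mul_nonneg hlam (hd i).1)
          ((mul_le_mul_of_nonneg_left (hd i).2 hlam).trans hl)
    _ = _ := by
        rw [← ENNReal.ofReal_prod_of_nonneg (by intros; positivity), ← Real.exp_sum, ← htr,
          Finset.mul_sum]
        simp_rw [mul_assoc]

/-! ### Random signs -/

/-- The sign encoded by a Boolean. -/
def sg (b : Bool) : ℝ := if b then 1 else -1

lemma sg_sq (b : Bool) : sg b ^ 2 = 1 := by cases b <;> simp [sg]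

/-- Exact product formula for the exponential moment of a Rademacher sum. -/
lemma sum_exp_sign {ι : Type*} [Fintype ι] [DecidableEq ι] (c : ι → ℝ) :
    ∑ ε : ι → Bool, Real.exp (∑ i, c i * sg (ε i)) = ∏ i, (2 * Real.cosh (c i)) := by
  simp_rw [Real.exp_sum]
  have h := Finset.prod_univ_sum (fun _ : ι => (Finset.univ : Finset Bool))
    (fun i b => Real.exp (c i * sg b))
  rw [Fintype.piFinset_univ] at h
  rw [← h]
  refine Finset.prod_congr rfl fun i _ => ?_
  rw [Fintype.sum_bool, Real.cosh_eq]; simp [sg]; ring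

lemma sum_exp_sign_le {ι : Type*} [Fintype ι] [DecidableEq ι] (c : ι → ℝ) :
    ∑ ε : ι → Bool, Real.exp (∑ i, c i * sg (ε i))
      ≤ 2 ^ Fintype.card ι * Real.exp (sqNorm c / 2) := by
  rw [sum_exp_sign, Finset.prod_mul_distrib, Finset.prod_const, Finset.card_univ, sqNorm,
    Finset.sum_div, Real.exp_sum]
  exact mul_le_mul_of_nonneg_left (Finset.prod_le_prod (fun i _ => (Real.cosh_pos _).le)
    fun i _ => Real.cosh_le_exp_half_sq _) (by positivity)

/-- Exponential moment of a Rademacher quadratic chaos, by Gaussian linearization. -/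
lemma chaos {κ ι : Type*} [Fintype κ] [Fintype ι] [DecidableEq ι]
    (B : Matrix κ ι ℝ) (β lam : ℝ) (hlam : 0 ≤ lam) (hl : lam * β ≤ 1 / 4) (hB : ∀ y, sqNorm (Bᵀ *ᵥ y) ≤ β * sqNorm y) :
    ∑ ε : ι → Bool, Real.exp (lam * sqNorm (B *ᵥ fun i => sg (ε i)))
      ≤ 2 ^ Fintype.card ι * Real.exp (2 * lam * frobSq B) := by
  rw [← ENNReal.ofReal_le_ofReal_iff (by positivity),
    ENNReal.ofReal_sum_of_nonneg (fun _ _ => (Real.exp_pos _).le)]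
  set r := √(2 * lam)
  have hr : r ^ 2 = 2 * lam := Real.sq_sqrt (by linarith)
  have h1 : ∀ ε : ι → Bool, ENNReal.ofReal (Real.exp (lam * sqNorm (B *ᵥ fun i => sg (ε i))))
      = ∫⁻ g, ENNReal.ofReal (Real.exp (∑ i, (r * (Bᵀ *ᵥ g) i) * sg (ε i))) ∂gau κ := by
    intro ε
    have := lintegral_exp_dot (r • (B *ᵥ fun i => sg (ε i)))
    have e1 : sqNorm (r • (B *ᵥ fun i => sg (ε i))) / 2
        = lam * sqNorm (B *ᵥ fun i => sg (ε i)) := by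
      simp only [sqNorm, Pi.smul_apply, smul_eq_mul, mul_pow, hr, ← Finset.mul_sum]; ring
    rw [e1] at this
    rw [← this]
    refine lintegral_congr fun g => ?_
    congr 2
    rw [smul_dotProduct, dotProduct_comm, Matrix.dotProduct_mulVec, ← Matrix.mulVec_transpose,
      smul_eq_mul, dotProduct, Finset.mul_sum]
    simp_rw [mul_assoc]
  simp_rw [h1]
  rw [← lintegral_finsetSum _ (fun ε _ => by unfold mulVec dotProduct; fun_prop)]
  calc _ ≤ ∫⁻ g, ENNReal.ofReal (2 ^ Fintype.card ι)
          * ENNReal.ofReal (Real.exp (lam * sqNorm (Bᵀ *ᵥ g))) ∂gau κ := by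
        refine lintegral_mono fun g => ?_
        rw [← ENNReal.ofReal_sum_of_nonneg (fun _ _ => (Real.exp_pos _).le),
          ← ENNReal.ofReal_mul (by positivity)]
        refine ENNReal.ofReal_le_ofReal ((sum_exp_sign_le _).trans (le_of_eq ?_))
        congr 2
        simp only [sqNorm, mul_pow, hr, ← Finset.mul_sum]; ring
    _ ≤ _ := by
        rw [lintegral_const_mul _ (by unfold sqNorm mulVec dotProduct; fun_prop),
          ENNReal.ofReal_mul (by positivity)]
        gcongr
        exact lintegral_exp_quad B β lam hlam hl hB

end SVLB

namespace SVLB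

/-! ### Sign plants against a fixed query or a fixed output -/

/-- The sign vector `ε` masked to the coordinate set `J`. -/
def sv {n : ℕ} (J : Finset (Fin n)) (ε : Fin n → Bool) : Fin n → ℝ :=
  fun a => if a ∈ J then sg (ε a) else 0

lemma sqNorm_sv {n : ℕ} (J : Finset (Fin n)) (ε : Fin n → Bool) : sqNorm (sv J ε) = J.card := by
  simp [sqNorm, sv, ite_pow, sg_sq]

lemma sum_vec {n : ℕ} (f : Fin (n * n) → ℝ) :
    ∑ p, f p = ∑ a, ∑ b, f (finProdFinEquiv (a, b)) := by
  rw [← finProdFinEquiv.sum_comp, Fintype.sum_prod_type]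

lemma tensor_apply {n : ℕ} (u v : Fin n → ℝ) (a b : Fin n) :
    tensor u v (finProdFinEquiv (a, b)) = u a * v b := by
  simp [tensor, _root_.vec]

lemma sqNorm_tensor {n : ℕ} (u v : Fin n → ℝ) : sqNorm (tensor u v) = sqNorm u * sqNorm v := by
  unfold sqNorm
  rw [sum_vec, Finset.sum_mul_sum]
  simp_rw [tensor_apply, mul_pow]

lemma frobSq_orth {k N : ℕ} (Q : Matrix (Fin k) (Fin N) ℝ) (hQ : Q * Qᵀ = 1) :
    frobSq Q = k := by
  have h1 : (Q * Qᵀ).trace = frobSq Q := by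
    rw [frobSq, Matrix.trace]
    refine Finset.sum_congr rfl fun i _ => ?_
    rw [Matrix.diag_apply, Matrix.mul_apply]
    exact Finset.sum_congr rfl fun j _ => by rw [Matrix.transpose_apply, sq]
  rw [← h1, hQ, Matrix.trace_one, Fintype.card_fin]

/-- Exponential moment of the squared mass that a fixed orthonormal family of queries sees of a
random sign rank-one matrix. -/
lemma sum_exp_query {n k : ℕ} (Q : Matrix (Fin k) (Fin (n * n)) ℝ) (hQ : Q * Qᵀ = 1)
    (J₁ J₂ : Finset (Fin n)) (q : ℕ) (hq : 0 < q) (h₁ : J₁.card = q) (h₂ : J₂.card = q) :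
    ∑ δ : Fin n → Bool, ∑ ε : Fin n → Bool,
        Real.exp (1 / (8 * q) * sqNorm (Q *ᵥ tensor (sv J₁ ε) (sv J₂ δ)))
      ≤ 2 ^ n * (2 ^ n * Real.exp (k / (2 * q))) := by
  have hq' : (0 : ℝ) < q := by exact_mod_cast hq
  let B : (Fin n → Bool) → Matrix (Fin k) (Fin n) ℝ := fun δ => Matrix.of fun r a =>
    if a ∈ J₁ then ∑ b, Q r (finProdFinEquiv (a, b)) * sv J₂ δ b else 0
  let B' : Matrix (Fin k × Fin n) (Fin n) ℝ := Matrix.of fun p b =>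
    if p.2 ∈ J₁ then (if b ∈ J₂ then Q p.1 (finProdFinEquiv (p.2, b)) else 0) else 0
  have e1 : ∀ ε δ, Q *ᵥ tensor (sv J₁ ε) (sv J₂ δ) = B δ *ᵥ fun i => sg (ε i) := by
    intro ε δ
    funext r
    simp only [mulVec, dotProduct, B, Matrix.of_apply]
    rw [sum_vec]
    refine Finset.sum_congr rfl fun a _ => ?_
    simp_rw [tensor_apply]
    by_cases ha : a ∈ J₁
    · rw [if_pos ha, Finset.sum_mul]
      refine Finset.sum_congr rfl fun b _ => ?_
      have : sv J₁ ε a = sg (ε a) := by simp [sv, ha]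
      rw [this]; ring
    · have : sv J₁ ε a = 0 := by simp [sv, ha]
      simp [this, ha]
  have e2 : ∀ δ, frobSq (B δ) = sqNorm (B' *ᵥ fun i => sg (δ i)) := by
    intro δ
    rw [frobSq, sqNorm, Fintype.sum_prod_type]
    refine Finset.sum_congr rfl fun r _ => Finset.sum_congr rfl fun a _ => ?_
    simp only [mulVec, dotProduct, B, B', Matrix.of_apply]
    congr 1
    by_cases ha : a ∈ J₁
    · simp only [ha, if_true]
      refine Finset.sum_congr rfl fun b _ => ?_
      by_cases hb : b ∈ J₂ <;> simp [sv, hb]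
    · simp [ha]
  have b1 : ∀ δ y, sqNorm ((B δ)ᵀ *ᵥ y) ≤ q * sqNorm y := by
    intro δ y
    rw [← sqNorm_transpose_mulVec Q hQ y]
    rw [sqNorm, sqNorm, sum_vec, Finset.mul_sum]
    refine Finset.sum_le_sum fun a _ => ?_
    have h3 := Finset.sum_mul_sq_le_sq_mul_sq Finset.univ
      (fun b => (Qᵀ *ᵥ y) (finProdFinEquiv (a, b))) (sv J₂ δ)
    have h4 : ∑ b, sv J₂ δ b ^ 2 = q := by
      have := sqNorm_sv J₂ δ; rw [h₂] at this; exact this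
    rw [h4, mul_comm _ (q : ℝ)] at h3
    refine le_trans ?_ h3
    by_cases ha : a ∈ J₁
    · refine le_of_eq ?_
      congr 1
      simp only [mulVec, dotProduct, B, Matrix.of_apply, Matrix.transpose_apply, if_pos ha,
        Finset.sum_mul]
      rw [Finset.sum_comm]
      refine Finset.sum_congr rfl fun b _ => Finset.sum_congr rfl fun r _ => ?_
      ring
    · have : ((B δ)ᵀ *ᵥ y) a = 0 := by
        simp [mulVec, dotProduct, B, ha]
      rw [this, zero_pow two_ne_zero]; positivity
  have b2 : ∀ x, sqNorm (B' *ᵥ x) ≤ q * sqNorm x := by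
    intro x
    have h3 : sqNorm (B' *ᵥ x) = ∑ a ∈ J₁, sqNorm (Q *ᵥ tensor (Pi.single a 1)
        (fun b => if b ∈ J₂ then x b else 0)) := by
      simp only [sqNorm]
      rw [Fintype.sum_prod_type, Finset.sum_comm, ← Finset.sum_subset (Finset.subset_univ J₁)]
      · refine Finset.sum_congr rfl fun a ha => Finset.sum_congr rfl fun r _ => ?_
        congr 1
        simp only [mulVec, dotProduct, B', Matrix.of_apply, ha, if_true]
        rw [sum_vec]
        symm
        rw [Finset.sum_eq_single a]
        · refine Finset.sum_congr rfl fun b _ => ?_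
          rw [tensor_apply]; by_cases hb : b ∈ J₂ <;> simp [hb]
        · intro a' _ ha'
          refine Finset.sum_eq_zero fun b _ => ?_
          rw [tensor_apply, Pi.single_eq_of_ne ha']; simp
        · simp
      · intro a _ ha
        refine Finset.sum_eq_zero fun r _ => ?_
        simp [mulVec, dotProduct, B', ha]
    rw [h3]
    calc _ ≤ ∑ a ∈ J₁, sqNorm x := by
          refine Finset.sum_le_sum fun a _ => (sqNorm_mulVec_le_of_orth Q hQ _).trans ?_
          rw [sqNorm_tensor]
          have : sqNorm (Pi.single a 1 : Fin n → ℝ) = 1 := by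
            rw [sqNorm, Finset.sum_eq_single a] <;> simp +contextual
          rw [this, one_mul]
          refine Finset.sum_le_sum fun b _ => ?_
          by_cases hb : b ∈ J₂
          · simp [hb]
          · simp only [hb, if_false]; nlinarith [sq_nonneg (x b)]
      _ = _ := by rw [Finset.sum_const, h₁, nsmul_eq_mul]
  have f2 : frobSq B' ≤ k := by
    rw [← frobSq_orth Q hQ, frobSq, frobSq, Fintype.sum_prod_type]
    refine Finset.sum_le_sum fun r _ => ?_
    rw [sum_vec (fun p => Q r p ^ 2)]
    refine Finset.sum_le_sum fun a _ => Finset.sum_le_sum fun b _ => ?_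
    simp only [B', Matrix.of_apply]
    split_ifs
    · exact le_rfl
    · simpa using sq_nonneg _
    · simpa using sq_nonneg _
  calc _ = ∑ δ : Fin n → Bool, ∑ ε : Fin n → Bool,
        Real.exp (1 / (8 * q) * sqNorm (B δ *ᵥ fun i => sg (ε i))) := by simp_rw [e1]
    _ ≤ ∑ δ : Fin n → Bool, 2 ^ n * Real.exp (2 * (1 / (8 * q)) * frobSq (B δ)) := by
        refine Finset.sum_le_sum fun δ _ => ?_
        have := chaos (B δ) q (1 / (8 * q)) (by positivity)
          (by rw [one_div, mul_inv, mul_assoc, inv_mul_cancel₀ hq'.ne']; norm_num) (b1 δ)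
        rwa [Fintype.card_fin] at this
    _ = 2 ^ n * ∑ δ : Fin n → Bool, Real.exp (2 * (1 / (8 * q))
          * sqNorm (B' *ᵥ fun i => sg (δ i))) := by
        rw [Finset.mul_sum]; simp_rw [e2]
    _ ≤ 2 ^ n * (2 ^ n * Real.exp (2 * (2 * (1 / (8 * q))) * frobSq B')) := by
        have := chaos B' q (2 * (1 / (8 * q))) (by positivity)
          (by rw [one_div, mul_inv, mul_assoc, mul_assoc, inv_mul_cancel₀ hq'.ne']; norm_num)
          (sqNorm_transpose_le B' q hq'.le b2)
        rw [Fintype.card_fin] at this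
        gcongr
    _ ≤ _ := by
        gcongr
        calc 2 * (2 * (1 / (8 * (q : ℝ)))) * frobSq B' ≤ 2 * (2 * (1 / (8 * (q : ℝ)))) * k := by
              gcongr
          _ = k / (2 * q) := by field_simp; norm_num

/-- Markov form of `sum_exp_query`: few sign patterns are seen with mass more than `τ`. -/
lemma card_query_tail {n k : ℕ} (Q : Matrix (Fin k) (Fin (n * n)) ℝ) (hQ : Q * Qᵀ = 1)
    (J₁ J₂ : Finset (Fin n)) (q : ℕ) (hq : 0 < q) (h₁ : J₁.card = q) (h₂ : J₂.card = q) (τ : ℝ) :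
    ((Finset.univ.filter fun p : (Fin n → Bool) × (Fin n → Bool) =>
        τ < sqNorm (Q *ᵥ ((1 / (q : ℝ)) • tensor (sv J₁ p.1) (sv J₂ p.2)))).card : ℝ)
      ≤ 4 ^ n * Real.exp (-(q * τ / 8) + k / (2 * q)) := by
  have hq' : (0 : ℝ) < q := by exact_mod_cast hq
  have h := sum_exp_query Q hQ J₁ J₂ q hq h₁ h₂
  rw [Finset.sum_comm, ← Fintype.sum_prod_type (f := fun p : (Fin n → Bool) × (Fin n → Bool) =>
    Real.exp (1 / (8 * q) * sqNorm (Q *ᵥ tensor (sv J₁ p.1) (sv J₂ p.2))))] at h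
  set F := Finset.univ.filter fun p : (Fin n → Bool) × (Fin n → Bool) =>
        τ < sqNorm (Q *ᵥ ((1 / (q : ℝ)) • tensor (sv J₁ p.1) (sv J₂ p.2)))
  have h2 : (F.card : ℝ) * Real.exp (q * τ / 8) ≤ ∑ p : (Fin n → Bool) × (Fin n → Bool),
      Real.exp (1 / (8 * q) * sqNorm (Q *ᵥ tensor (sv J₁ p.1) (sv J₂ p.2))) := by
    rw [← nsmul_eq_mul, ← Finset.sum_const]
    refine (Finset.sum_le_sum fun p hp => ?_).trans (Finset.sum_le_sum_of_subset_of_nonneg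
      (Finset.subset_univ F) fun _ _ _ => (Real.exp_pos _).le)
    have hp' := (Finset.mem_filter.1 hp).2
    have e : sqNorm (Q *ᵥ ((1 / (q : ℝ)) • tensor (sv J₁ p.1) (sv J₂ p.2)))
        = (1 / q) ^ 2 * sqNorm (Q *ᵥ tensor (sv J₁ p.1) (sv J₂ p.2)) := by
      rw [Matrix.mulVec_smul]
      simp only [sqNorm, Pi.smul_apply, smul_eq_mul, mul_pow, ← Finset.mul_sum]
    rw [e] at hp'
    refine Real.exp_le_exp.2 ?_
    have h5 : q * τ / 8 ≤ q / 8 * ((1 / q) ^ 2 * sqNorm (Q *ᵥ tensor (sv J₁ p.1) (sv J₂ p.2))) := by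
      rw [mul_div_right_comm]; exact mul_le_mul_of_nonneg_left hp'.le (by positivity)
    refine h5.trans (le_of_eq ?_)
    field_simp
  have h3 := h2.trans h
  have e4 : (4 : ℝ) ^ n = 2 ^ n * 2 ^ n := by rw [← mul_pow]; norm_num
  rw [Real.exp_add, Real.exp_neg, e4]
  have hpos := Real.exp_pos (q * τ / 8)
  rw [← le_div_iff₀ hpos] at h3
  refine h3.trans (le_of_eq ?_)
  field_simp

/-- Hoeffding bound: few sign patterns correlate with a fixed unit vector. -/
lemma card_corr {n : ℕ} (x : Fin n → ℝ) (hx : sqNorm x = 1)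
    (J₁ : Finset (Fin n)) (q : ℕ) (hq : 0 < q) :
    ((Finset.univ.filter fun ε : Fin n → Bool =>
        1 / 5 ≤ |x ⬝ᵥ ((1 / √(q : ℝ)) • sv J₁ ε)|).card : ℝ)
      ≤ 2 ^ n * (2 * Real.exp (-(q / 50))) := by
  have hq' : (0 : ℝ) < q := by exact_mod_cast hq
  have hs : 0 < √(q : ℝ) := Real.sqrt_pos.2 hq'
  have hss : √(q : ℝ) * √(q : ℝ) = q := Real.mul_self_sqrt hq'.le
  set F := Finset.univ.filter fun ε : Fin n → Bool =>
        1 / 5 ≤ |x ⬝ᵥ ((1 / √(q : ℝ)) • sv J₁ ε)|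
  set lam : ℝ := q / 5
  let c : Fin n → ℝ := fun a => if a ∈ J₁ then lam / √(q : ℝ) * x a else 0
  have hc : ∀ ε, lam * (x ⬝ᵥ ((1 / √(q : ℝ)) • sv J₁ ε)) = ∑ i, c i * sg (ε i) := by
    intro ε
    rw [dotProduct, Finset.mul_sum]
    refine Finset.sum_congr rfl fun a _ => ?_
    by_cases ha : a ∈ J₁
    · simp only [Pi.smul_apply, sv, ha, c, if_true, smul_eq_mul]; ring
    · simp [sv, ha, c]
  have hcn : sqNorm c ≤ q / 25 := by
    calc sqNorm c ≤ ∑ a, (lam / √(q : ℝ)) ^ 2 * x a ^ 2 := by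
          refine Finset.sum_le_sum fun a _ => ?_
          by_cases ha : a ∈ J₁
          · simp [c, ha, mul_pow]
          · simp only [c, ha, if_false, zero_pow two_ne_zero]; positivity
      _ = (lam / √(q : ℝ)) ^ 2 * sqNorm x := by rw [sqNorm, Finset.mul_sum]
      _ = q / 25 := by
          rw [hx, mul_one, div_pow, Real.sq_sqrt hq'.le]; simp only [lam]; field_simp; norm_num
  have hneg : sqNorm (-c) = sqNorm c := by simp [sqNorm]
  have h1 := sum_exp_sign_le c
  have h2 := sum_exp_sign_le (-c)
  rw [hneg] at h2
  rw [Fintype.card_fin] at h1 h2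
  have h3 : (F.card : ℝ) * Real.exp (q / 25) ≤ ∑ ε : Fin n → Bool,
      (Real.exp (∑ i, c i * sg (ε i)) + Real.exp (∑ i, (-c) i * sg (ε i))) := by
    rw [← nsmul_eq_mul, ← Finset.sum_const]
    refine (Finset.sum_le_sum fun ε hε => ?_).trans (Finset.sum_le_sum_of_subset_of_nonneg
      (Finset.subset_univ F) fun _ _ _ => by positivity)
    have hp := (Finset.mem_filter.1 hε).2
    have e2 : ∑ i, (-c) i * sg (ε i) = -∑ i, c i * sg (ε i) := by simp
    rw [e2, ← hc]
    have hl : (q : ℝ) / 25 = lam * (1 / 5) := by simp only [lam]; ring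
    have hl0 : 0 ≤ lam := by positivity
    rw [hl]
    rcases le_abs.1 hp with h | h
    · exact (Real.exp_le_exp.2 (mul_le_mul_of_nonneg_left h hl0)).trans
        (le_add_of_nonneg_right (Real.exp_pos _).le)
    · refine (Real.exp_le_exp.2 ?_).trans (le_add_of_nonneg_left (Real.exp_pos _).le)
      rw [← mul_neg]
      exact mul_le_mul_of_nonneg_left h hl0
  rw [Finset.sum_add_distrib] at h3
  have h4 : Real.exp (sqNorm c / 2) ≤ Real.exp (q / 50) := Real.exp_le_exp.2 (by linarith)
  have h5 : (F.card : ℝ) * Real.exp (q / 25) ≤ 2 ^ n * (2 * Real.exp (q / 50)) := by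
    have h6 : (2 : ℝ) ^ n * Real.exp (sqNorm c / 2) ≤ 2 ^ n * Real.exp (q / 50) :=
      mul_le_mul_of_nonneg_left h4 (by positivity)
    linarith
  rw [← le_div_iff₀ (Real.exp_pos _)] at h5
  refine h5.trans (le_of_eq ?_)
  rw [mul_div_assoc, mul_div_assoc, ← Real.exp_sub]
  congr 3; ring

end SVLB

namespace SVLB

/-! ### Euclidean norm -/

/-- Euclidean norm of a finitely-indexed real vector. -/
def nrm {ι : Type*} [Fintype ι] (x : ι → ℝ) : ℝ := √(sqNorm x)

section nrm
variable {ι : Type*} [Fintype ι]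

lemma nrm_eq (x : ι → ℝ) : nrm x = ‖WithLp.toLp 2 x‖ := by
  rw [EuclideanSpace.norm_eq, nrm, sqNorm]
  simp

lemma nrm_nonneg (x : ι → ℝ) : 0 ≤ nrm x := Real.sqrt_nonneg _

lemma nrm_sq (x : ι → ℝ) : nrm x ^ 2 = sqNorm x := Real.sq_sqrt (sqNorm_nonneg x)

lemma nrm_add_le (x y : ι → ℝ) : nrm (x + y) ≤ nrm x + nrm y := by
  simp only [nrm_eq, WithLp.toLp_add]; exact norm_add_le _ _

lemma nrm_sub_le (x y : ι → ℝ) : nrm (x - y) ≤ nrm x + nrm y := by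
  simp only [nrm_eq, WithLp.toLp_sub]; exact norm_sub_le _ _

lemma nrm_smul (c : ℝ) (x : ι → ℝ) : nrm (c • x) = |c| * nrm x := by
  simp only [nrm_eq, WithLp.toLp_smul, norm_smul, Real.norm_eq_abs]

lemma nrm_neg (x : ι → ℝ) : nrm (-x) = nrm x := by
  simp [nrm, sqNorm]

lemma nrm_eq_zero {x : ι → ℝ} (h : nrm x = 0) : x = 0 := by
  rw [nrm_eq, norm_eq_zero] at h
  simpa using h

lemma nrm_pos {x : ι → ℝ} (h : x ≠ 0) : 0 < nrm x :=
  (nrm_nonneg x).lt_of_ne' fun h' => h (nrm_eq_zero h')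

lemma dot_self (x : ι → ℝ) : x ⬝ᵥ x = nrm x ^ 2 := by rw [nrm_sq, sqNorm_eq_dot]

lemma abs_dot_le (x y : ι → ℝ) : |x ⬝ᵥ y| ≤ nrm x * nrm y := by
  refine abs_le_of_sq_le_sq ?_ (mul_nonneg (nrm_nonneg x) (nrm_nonneg y))
  rw [mul_pow, nrm_sq, nrm_sq]; exact dot_sq_le x y

lemma dot_le (x y : ι → ℝ) : x ⬝ᵥ y ≤ nrm x * nrm y := (le_abs_self _).trans (abs_dot_le x y)

lemma nrm_le_of_sq {x : ι → ℝ} {c : ℝ} (hc : 0 ≤ c) (h : sqNorm x ≤ c ^ 2) : nrm x ≤ c :=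
  Real.sqrt_le_iff.2 ⟨hc, h⟩

lemma nrm_normalize {x : ι → ℝ} (h : x ≠ 0) : nrm ((nrm x)⁻¹ • x) = 1 := by
  rw [nrm_smul, abs_of_pos (inv_pos.2 (nrm_pos h)), inv_mul_cancel₀ (nrm_pos h).ne']

end nrm

/-- A vector in `ℝ^{n²}` read as an `n × n` matrix. -/
def mat {n : ℕ} (g : Fin (n * n) → ℝ) : Matrix (Fin n) (Fin n) ℝ :=
  Matrix.of fun a b => g (finProdFinEquiv (a, b))

lemma vec_mat {n : ℕ} (g : Fin (n * n) → ℝ) : _root_.vec n (mat g) = g := by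
  funext p; simp [_root_.vec, mat, -finProdFinEquiv_symm_apply]

lemma tensor_dot {n : ℕ} (x y : Fin n → ℝ) (g : Fin (n * n) → ℝ) :
    tensor x y ⬝ᵥ g = x ⬝ᵥ (mat g *ᵥ y) := by
  simp only [dotProduct, mulVec, mat, Matrix.of_apply]
  rw [sum_vec]
  simp_rw [tensor_apply, Finset.mul_sum]
  refine Finset.sum_congr rfl fun a _ => Finset.sum_congr rfl fun b _ => by ring

/-! ### Operator norm of a Gaussian matrix -/

/-- Points of the grid `(1/n) ℤⁿ ∩ [-1, 1]ⁿ`. -/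
def pt {n : ℕ} (z : Fin n → Fin (2 * n + 1)) : Fin n → ℝ := fun i => ((z i : ℕ) - n : ℝ) / n

/-- The grid points form a `1/4`-net of the unit ball: rounding moves each coordinate by at most
`1 / n`. -/
lemma exists_pt {n : ℕ} (hn : 16 ≤ n) (x : Fin n → ℝ) (hx : nrm x ≤ 1) :
    ∃ z : Fin n → Fin (2 * n + 1), nrm (x - pt z) ≤ 1 / 4 := by
  have hn0 : (0 : ℝ) < n := by positivity
  have hxi : ∀ i, |x i| ≤ 1 := fun i => by
    have h1 : x i ^ 2 ≤ sqNorm x :=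
      Finset.single_le_sum (f := fun i => x i ^ 2) (fun _ _ => sq_nonneg _) (Finset.mem_univ i)
    rw [← nrm_sq] at h1
    have := nrm_nonneg x
    exact abs_le_of_sq_le_sq (h1.trans (pow_le_pow_left₀ this hx 2)) zero_le_one
  have hz : ∀ i, ∃ z : Fin (2 * n + 1), |x i - ((z : ℕ) - n : ℝ) / n| ≤ 1 / n := by
    intro i
    obtain ⟨h1, h2⟩ := abs_le.1 (hxi i)
    have f1 := Int.floor_le (n * x i)
    have f2 := Int.lt_floor_add_one (n * x i)
    have f3 : -(n : ℤ) ≤ ⌊n * x i⌋ := by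
      rw [Int.le_floor]; push_cast; nlinarith
    have f4 : ⌊n * x i⌋ ≤ (n : ℤ) := by
      have : (⌊n * x i⌋ : ℝ) ≤ n := f1.trans (by nlinarith)
      exact_mod_cast this
    obtain ⟨m, hm⟩ := Int.eq_ofNat_of_zero_le (show 0 ≤ ⌊n * x i⌋ + n by linarith)
    refine ⟨⟨m, by omega⟩, ?_⟩
    have e : ((m : ℕ) : ℝ) = ⌊n * x i⌋ + n := by
      have : ((⌊n * x i⌋ + n : ℤ) : ℝ) = ((m : ℤ) : ℝ) := by rw [hm]
      push_cast at this; linarith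
    simp only [e]
    have e2 : x i - (⌊n * x i⌋ + n - n) / n = (n * x i - ⌊n * x i⌋) / n := by field_simp; ring
    rw [e2, abs_div, abs_of_pos hn0]
    gcongr
    rw [abs_le]; constructor <;> linarith
  choose z hz using hz
  refine ⟨z, nrm_le_of_sq (by norm_num) ?_⟩
  calc sqNorm (x - pt z) ≤ ∑ _i : Fin n, (1 / (n : ℝ)) ^ 2 := by
        refine Finset.sum_le_sum fun i _ => ?_
        exact sq_le_sq.2 ((hz i).trans (le_abs_self _))
    _ = 1 / n := by simp; field_simp
    _ ≤ (1 / 4) ^ 2 := by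
        have : (16 : ℝ) ≤ n := by exact_mod_cast hn
        rw [div_le_iff₀ hn0]; linarith

lemma gau_tail {N : ℕ} (c : Fin N → ℝ) (hc : sqNorm c ≤ 16) (θ : ℝ) (hθ : 0 ≤ θ) :
    gau (Fin N) {g | θ < c ⬝ᵥ g} ≤ ENNReal.ofReal (Real.exp (-(θ ^ 2 / 32))) := by
  have h := lintegral_exp_dot ((θ / 16) • c)
  have h1 := mul_meas_ge_le_lintegral (μ := gau (Fin N))
    (f := fun g => ENNReal.ofReal (Real.exp (((θ / 16) • c) ⬝ᵥ g)))
    (by have := measurable_dot ((θ / 16) • c); fun_prop) (ENNReal.ofReal (Real.exp (θ / 16 * θ)))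
  rw [h] at h1
  have h2 : {g : Fin N → ℝ | θ < c ⬝ᵥ g} ⊆ {g | ENNReal.ofReal (Real.exp (θ / 16 * θ))
      ≤ ENNReal.ofReal (Real.exp (((θ / 16) • c) ⬝ᵥ g))} := by
    intro g hg
    refine ENNReal.ofReal_le_ofReal (Real.exp_le_exp.2 ?_)
    rw [smul_dotProduct, smul_eq_mul]
    exact mul_le_mul_of_nonneg_left (le_of_lt hg) (by positivity)
  have h3 : sqNorm ((θ / 16) • c) / 2 ≤ θ ^ 2 / 32 := by
    have : sqNorm ((θ / 16) • c) = (θ / 16) ^ 2 * sqNorm c := by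
      simp only [sqNorm, Pi.smul_apply, smul_eq_mul, mul_pow, ← Finset.mul_sum]
    rw [this]
    nlinarith [sq_nonneg (θ / 16)]
  have hpos : ENNReal.ofReal (Real.exp (θ / 16 * θ)) ≠ 0 := by
    simpa using Real.exp_pos _
  refine (measure_mono h2).trans ?_
  rw [mul_comm, ← ENNReal.le_div_iff_mul_le (Or.inl hpos) (Or.inl ENNReal.ofReal_ne_top)] at h1
  refine h1.trans ?_
  rw [← ENNReal.ofReal_div_of_pos (Real.exp_pos _), ← Real.exp_sub]
  refine ENNReal.ofReal_le_ofReal (Real.exp_le_exp.2 ?_)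
  nlinarith

/-- The event that the Gaussian matrix is small on the grid. -/
def goodG (n : ℕ) (θ : ℝ) : Set (Fin (n * n) → ℝ) :=
  {g | ∀ z z' : Fin n → Fin (2 * n + 1), nrm (pt z) ≤ 2 → nrm (pt z') ≤ 2 →
    tensor (pt z) (pt z') ⬝ᵥ g ≤ θ}

lemma measurableSet_goodG (n : ℕ) (θ : ℝ) : MeasurableSet (goodG n θ) := by
  unfold goodG
  simp only [Set.ofPred_forall]
  refine MeasurableSet.iInter fun z => MeasurableSet.iInter fun z' => MeasurableSet.iInter fun _ =>
    MeasurableSet.iInter fun _ => ?_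
  exact measurableSet_le (measurable_dot _) measurable_const

/-- Union bound over all pairs of grid points. -/
lemma gau_goodG_compl (n : ℕ) (θ : ℝ) (hθ : 0 ≤ θ) :
    gau (Fin (n * n)) (goodG n θ)ᶜ
      ≤ ENNReal.ofReal ((2 * n + 1) ^ (2 * n) * Real.exp (-(θ ^ 2 / 32))) := by
  let S : (Fin n → Fin (2 * n + 1)) × (Fin n → Fin (2 * n + 1)) → Set (Fin (n * n) → ℝ) := fun p =>
    if nrm (pt p.1) ≤ 2 ∧ nrm (pt p.2) ≤ 2 then {g | θ < tensor (pt p.1) (pt p.2) ⬝ᵥ g} else ∅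
  have hsub : (goodG n θ)ᶜ ⊆ ⋃ p, S p := by
    intro g hg
    simp only [goodG, Set.mem_compl_iff, Set.mem_ofPred_eq, not_forall, not_le] at hg
    obtain ⟨z, z', h1, h2, h3⟩ := hg
    refine Set.mem_iUnion.2 ⟨(z, z'), ?_⟩
    simp only [S, h1, h2, and_self, if_true]; exact h3
  refine (measure_mono hsub).trans ((measure_iUnion_fintype_le _ _).trans ?_)
  calc ∑ p, gau (Fin (n * n)) (S p)
      ≤ ∑ _p : (Fin n → Fin (2 * n + 1)) × (Fin n → Fin (2 * n + 1)),
          ENNReal.ofReal (Real.exp (-(θ ^ 2 / 32))) := by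
        refine Finset.sum_le_sum fun p _ => ?_
        by_cases h : nrm (pt p.1) ≤ 2 ∧ nrm (pt p.2) ≤ 2
        · simp only [S, h, and_self, if_true]
          refine gau_tail _ ?_ θ hθ
          rw [sqNorm_tensor, ← nrm_sq, ← nrm_sq]
          have h1 := nrm_nonneg (pt p.1)
          have h2 := nrm_nonneg (pt p.2)
          calc nrm (pt p.1) ^ 2 * nrm (pt p.2) ^ 2 ≤ 2 ^ 2 * 2 ^ 2 := by
                gcongr
                · exact h.1
                · exact h.2
            _ = 16 := by norm_num
        · simp [S, h]
    _ = _ := by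
        rw [Finset.sum_const, nsmul_eq_mul, Finset.card_univ, ENNReal.ofReal_mul (by positivity)]
        congr 1
        rw [Fintype.card_prod, Fintype.card_fun, Fintype.card_fin, Fintype.card_fin, ← pow_add,
          ← two_mul]
        rw [show (2 * (n : ℝ) + 1) ^ (2 * n) = (((2 * n + 1) ^ (2 * n) : ℕ) : ℝ) by push_cast; rfl,
          ENNReal.ofReal_natCast]

/-- Net argument: on the good event the bilinear form is bounded by `4θ`. -/
lemma goodG_bound {n : ℕ} (hn : 16 ≤ n) (θ : ℝ) (g : Fin (n * n) → ℝ) (hg : g ∈ goodG n θ)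
    (x y : Fin n → ℝ) : x ⬝ᵥ (mat g *ᵥ y) ≤ 4 * θ * (nrm x * nrm y) := by
  set G := mat g
  let S : Set ℝ := {c | ∃ x y : Fin n → ℝ, nrm x ≤ 1 ∧ nrm y ≤ 1 ∧ c = x ⬝ᵥ (G *ᵥ y)}
  have h0 : (0 : ℝ) ∈ S := ⟨0, 0, by simp [nrm, sqNorm], by simp [nrm, sqNorm], by simp⟩
  have hbdd : BddAbove S := by
    refine ⟨nrm g, ?_⟩
    rintro c ⟨x, y, hx, hy, rfl⟩
    rw [← tensor_dot]
    refine (dot_le _ _).trans ?_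
    have : nrm (tensor x y) ≤ 1 := by
      refine nrm_le_of_sq zero_le_one ?_
      rw [sqNorm_tensor, ← nrm_sq, ← nrm_sq, one_pow]
      exact mul_le_one₀ (pow_le_one₀ (nrm_nonneg _) hx) (sq_nonneg _)
        (pow_le_one₀ (nrm_nonneg _) hy)
    calc _ ≤ 1 * nrm g := mul_le_mul_of_nonneg_right this (nrm_nonneg _)
      _ = _ := one_mul _
  set m := sSup S
  have hm0 : 0 ≤ m := le_csSup hbdd h0
  have hhom : ∀ x y : Fin n → ℝ, x ⬝ᵥ (G *ᵥ y) ≤ m * (nrm x * nrm y) := by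
    intro x y
    by_cases hx : x = 0
    · subst hx; simp [nrm, sqNorm]
    by_cases hy : y = 0
    · subst hy; simp [nrm, sqNorm]
    have h1 : ((nrm x)⁻¹ • x) ⬝ᵥ (G *ᵥ ((nrm y)⁻¹ • y)) ≤ m :=
      le_csSup hbdd ⟨_, _, (nrm_normalize hx).le, (nrm_normalize hy).le, rfl⟩
    rw [smul_dotProduct, Matrix.mulVec_smul, dotProduct_smul, smul_eq_mul, smul_eq_mul] at h1
    have hx' := nrm_pos hx
    have hy' := nrm_pos hy
    rw [← mul_assoc, ← mul_inv, inv_mul_le_iff₀ (by positivity)] at h1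
    linarith
  have hm : m ≤ 4 * θ := by
    have hle : m ≤ θ + 3 / 4 * m := by
      refine csSup_le ⟨0, h0⟩ ?_
      rintro c ⟨x, y, hx, hy, rfl⟩
      obtain ⟨z, hz⟩ := exists_pt hn x hx
      obtain ⟨z', hz'⟩ := exists_pt hn y hy
      have n1 : nrm (pt z) ≤ 2 := by
        have := nrm_sub_le x (x - pt z)
        rw [sub_sub_cancel] at this; linarith
      have n2 : nrm (pt z') ≤ 2 := by
        have := nrm_sub_le y (y - pt z')
        rw [sub_sub_cancel] at this; linarith
      have h1 := hg z z' n1 n2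
      rw [tensor_dot] at h1
      have h2 := hhom (x - pt z) y
      have h3 := hhom (pt z) (y - pt z')
      have e : x ⬝ᵥ (G *ᵥ y) = pt z ⬝ᵥ (G *ᵥ pt z') + (x - pt z) ⬝ᵥ (G *ᵥ y)
          + pt z ⬝ᵥ (G *ᵥ (y - pt z')) := by
        rw [Matrix.mulVec_sub, sub_dotProduct, dotProduct_sub]; ring
      rw [e]
      have h4 : nrm (x - pt z) * nrm y ≤ 1 / 4 * 1 :=
        mul_le_mul hz hy (nrm_nonneg _) (by norm_num)
      have h5 : nrm (pt z) * nrm (y - pt z') ≤ 2 * (1 / 4) :=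
        mul_le_mul n1 hz' (nrm_nonneg _) (by norm_num)
      have h6 := mul_le_mul_of_nonneg_left h4 hm0
      have h7 := mul_le_mul_of_nonneg_left h5 hm0
      linarith
    linarith
  exact (hhom x y).trans (mul_le_mul_of_nonneg_right hm (mul_nonneg (nrm_nonneg _) (nrm_nonneg _)))

end SVLB

namespace SVLB

/-! ### Singular values through the Eckart–Young characterization -/

lemma sqNorm_mulVec_le_frob {m n : Type*} [Fintype m] [Fintype n] (A : Matrix m n ℝ) (x : n → ℝ) :
    sqNorm (A *ᵥ x) ≤ frobSq A * sqNorm x := by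
  rw [sqNorm, frobSq, Finset.sum_mul]
  exact Finset.sum_le_sum fun i _ => dot_sq_le (A i) x

lemma le_specNorm {m n : Type*} [Fintype m] [Fintype n] (A : Matrix m n ℝ) {x : n → ℝ}
    (hx : nrm x ≤ 1) : nrm (A *ᵥ x) ≤ specNorm A := by
  have h1 : ∀ y : n → ℝ, nrm y ≤ 1 ↔ sqNorm y ≤ 1 := fun y => by
    rw [nrm, Real.sqrt_le_one]
  refine le_csSup ⟨√(frobSq A), ?_⟩ ⟨x, (h1 x).1 hx, rfl⟩
  rintro _ ⟨y, hy, rfl⟩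
  refine Real.sqrt_le_sqrt ((sqNorm_mulVec_le_frob A y).trans ?_)
  exact mul_le_of_le_one_right (frobSq_nonneg A) hy

lemma specNorm_le {m n : Type*} [Fintype m] [Fintype n] (A : Matrix m n ℝ) {c : ℝ} (hc : 0 ≤ c)
    (h : ∀ x, nrm (A *ᵥ x) ≤ c * nrm x) : specNorm A ≤ c := by
  refine csSup_le ⟨_, 0, by simp [sqNorm], rfl⟩ ?_
  rintro _ ⟨y, hy, rfl⟩
  refine (h y).trans (mul_le_of_le_one_right hc ?_)
  exact Real.sqrt_le_one.2 hy

lemma specNorm_nonneg {m n : Type*} [Fintype m] [Fintype n] (A : Matrix m n ℝ) :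
    0 ≤ specNorm A :=
  (nrm_nonneg _).trans (le_specNorm A (x := 0) (by simp [nrm, sqNorm]))

lemma singVal_le {m n : Type*} [Fintype m] [Fintype n] (A X : Matrix m n ℝ) (i : ℕ) {c : ℝ}
    (hX : X.rank ≤ i - 1) (hc : 0 ≤ c) (h : ∀ x, nrm ((A - X) *ᵥ x) ≤ c * nrm x) :
    singVal A i ≤ c := by
  have hb : BddBelow {c | ∃ X : Matrix m n ℝ, X.rank ≤ i - 1 ∧ c = specNorm (A - X)} := by
    refine ⟨0, ?_⟩
    rintro _ ⟨Y, _, rfl⟩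
    exact specNorm_nonneg _
  exact (csInf_le hb ⟨X, hX, rfl⟩).trans (specNorm_le _ hc h)

/-- Max-min lower bound: `A` expands an `i`-dimensional space, parametrized injectively by `φ`,
by a factor at least `c`. -/
lemma le_singVal {n : ℕ} (A : Matrix (Fin n) (Fin n) ℝ) (i : ℕ) (hi : 1 ≤ i) {c : ℝ}
    {F : Type*} [AddCommGroup F] [Module ℝ F] [FiniteDimensional ℝ F] (φ : F →ₗ[ℝ] (Fin n → ℝ))
    (hφ : Function.Injective φ) (hF : i ≤ Module.finrank ℝ F)
    (h : ∀ f, c * nrm (φ f) ≤ nrm (A *ᵥ φ f)) : c ≤ singVal A i := by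
  refine le_csInf ⟨_, 0, by simp, rfl⟩ ?_
  rintro _ ⟨X, hX, rfl⟩
  have hk : LinearMap.ker (X.mulVecLin ∘ₗ φ) ≠ ⊥ := by
    intro hk
    have h1 := LinearMap.finrank_range_add_finrank_ker (X.mulVecLin ∘ₗ φ)
    rw [hk, finrank_bot, add_zero] at h1
    have h2 : Module.finrank ℝ (LinearMap.range (X.mulVecLin ∘ₗ φ)) ≤ X.rank :=
      Submodule.finrank_mono (LinearMap.range_comp_le_range _ _)
    omega
  obtain ⟨f, hf, hf0⟩ := Submodule.exists_mem_ne_zero_of_ne_bot hk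
  have hf' : X *ᵥ φ f = 0 := by simpa using hf
  have hx0 : φ f ≠ 0 := fun h0 => hf0 (hφ (by simpa using h0))
  have hp := nrm_pos hx0
  have h3 := le_specNorm (A - X) (nrm_normalize hx0).le
  rw [mulVec_smul, sub_mulVec, hf', sub_zero, nrm_smul, abs_of_pos (inv_pos.2 hp)] at h3
  refine le_trans ?_ h3
  rw [le_inv_mul_iff₀ hp, mul_comm]
  exact h f

lemma rank_add_le {n : ℕ} (M : Matrix (Fin n) (Fin n) ℝ)
    {F : Type*} [AddCommGroup F] [Module ℝ F] [FiniteDimensional ℝ F] (φ : F →ₗ[ℝ] (Fin n → ℝ))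
    (hφ : Function.Injective φ) (h : ∀ f, M *ᵥ φ f = 0) : M.rank + Module.finrank ℝ F ≤ n := by
  have h1 := LinearMap.finrank_range_add_finrank_ker M.mulVecLin
  have h2 : Module.finrank ℝ F ≤ Module.finrank ℝ (LinearMap.ker M.mulVecLin) := by
    rw [← LinearMap.finrank_range_of_inj hφ]
    refine Submodule.finrank_mono ?_
    rintro _ ⟨f, rfl⟩
    simpa using h f
  rw [Module.finrank_fin_fun] at h1
  have h3 : M.rank = Module.finrank ℝ (LinearMap.range M.mulVecLin) := rfl
  omega

/-! ### The planted matrix and its `i`-th singular pair -/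

section plant
variable {n : ℕ}

/-- The vector `x` with its coordinates in `J` set to zero. -/
def cut (J : Finset (Fin n)) (x : Fin n → ℝ) : Fin n → ℝ := fun a => if a ∈ J then 0 else x a

/-- The diagonal matrix `C (I + η E)`, with `C = 10000 s` and `E` the coordinate projection
onto the complement of `J`. -/
def base (J : Finset (Fin n)) (η s : ℝ) : Matrix (Fin n) (Fin n) ℝ :=
  Matrix.diagonal fun a => 10000 * s + if a ∈ J then 0 else η * (10000 * s)

lemma base_mulVec (J : Finset (Fin n)) (η s : ℝ) (x : Fin n → ℝ) :
    base J η s *ᵥ x = (10000 * s) • x + (η * (10000 * s)) • cut J x := by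
  funext a
  simp only [base, mulVec_diagonal, Pi.add_apply, Pi.smul_apply, cut, smul_eq_mul]
  split_ifs <;> ring

lemma dot_cut (J : Finset (Fin n)) (x y : Fin n → ℝ) : x ⬝ᵥ cut J y = cut J x ⬝ᵥ cut J y := by
  refine Finset.sum_congr rfl fun a _ => ?_
  simp only [cut]; split_ifs <;> simp

lemma cut_dot (J : Finset (Fin n)) (x y : Fin n → ℝ) : cut J x ⬝ᵥ y = cut J x ⬝ᵥ cut J y := by
  rw [dotProduct_comm, dot_cut, dotProduct_comm]

lemma cut_add (J : Finset (Fin n)) (x y : Fin n → ℝ) : cut J (x + y) = cut J x + cut J y := by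
  funext a; simp only [cut, Pi.add_apply]; split_ifs <;> simp

lemma cut_sub (J : Finset (Fin n)) (x y : Fin n → ℝ) : cut J (x - y) = cut J x - cut J y := by
  funext a; simp only [cut, Pi.sub_apply]; split_ifs <;> simp

lemma nrm_cut_le (J : Finset (Fin n)) (x : Fin n → ℝ) : nrm (cut J x) ≤ nrm x := by
  refine Real.sqrt_le_sqrt (Finset.sum_le_sum fun a _ => ?_)
  simp only [cut]; split_ifs
  · rw [zero_pow two_ne_zero]; positivity
  · exact le_rfl

lemma cut_cut (J : Finset (Fin n)) (x : Fin n → ℝ) : cut J (cut J x) = cut J x := by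
  funext a; simp only [cut]; split_ifs <;> simp

/-- The planted matrix: the diagonal matrix `base`, the noise `G`, and the spike `s u vᵀ`. -/
def planted (J : Finset (Fin n)) (η s : ℝ) (G : Matrix (Fin n) (Fin n) ℝ) (u v : Fin n → ℝ) :
    Matrix (Fin n) (Fin n) ℝ :=
  base J η s + (G + s • vecMulVec u v)

lemma dot_spike (s : ℝ) (G : Matrix (Fin n) (Fin n) ℝ) (u v x y : Fin n → ℝ) :
    x ⬝ᵥ ((G + s • vecMulVec u v) *ᵥ y) = x ⬝ᵥ (G *ᵥ y) + s * ((x ⬝ᵥ u) * (v ⬝ᵥ y)) := by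
  rw [add_mulVec, dotProduct_add, smul_mulVec, dotProduct_smul, smul_eq_mul, vecMulVec_mulVec]
  rw [op_smul_eq_smul, dotProduct_smul, smul_eq_mul, mul_comm (v ⬝ᵥ y)]

lemma dot_spike_le {s : ℝ} (hs : 0 < s) {G : Matrix (Fin n) (Fin n) ℝ} {u v : Fin n → ℝ}
    (hG : ∀ x y, x ⬝ᵥ (G *ᵥ y) ≤ s / 1000 * (nrm x * nrm y)) (hu : nrm u = 1) (hv : nrm v = 1)
    (x y : Fin n → ℝ) :
    |x ⬝ᵥ ((G + s • vecMulVec u v) *ᵥ y)| ≤ 2 * s * (nrm x * nrm y) := by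
  have h1 := hG x y
  have h2 := hG (-x) y
  rw [neg_dotProduct, nrm_neg] at h2
  have h3 : |(x ⬝ᵥ u) * (v ⬝ᵥ y)| ≤ nrm x * nrm y := by
    rw [abs_mul]
    have a1 := abs_dot_le x u
    have a2 := abs_dot_le v y
    rw [hu, mul_one] at a1
    rw [hv, one_mul] at a2
    exact mul_le_mul a1 a2 (abs_nonneg _) (nrm_nonneg _)
  have hp : 0 ≤ nrm x * nrm y := mul_nonneg (nrm_nonneg _) (nrm_nonneg _)
  rw [dot_spike, abs_le]
  obtain ⟨h4, h5⟩ := abs_le.1 h3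
  constructor <;> nlinarith

lemma nrm_mulVec_le {X : Matrix (Fin n) (Fin n) ℝ} {K : ℝ}
    (h : ∀ x y, |x ⬝ᵥ (X *ᵥ y)| ≤ K * (nrm x * nrm y)) (y : Fin n → ℝ) :
    nrm (X *ᵥ y) ≤ K * nrm y := by
  by_cases h0 : X *ᵥ y = 0
  · rw [h0]
    by_cases hy : nrm y = 0
    · rw [hy]; simp [nrm, sqNorm]
    · have hy' : 0 < nrm y := (nrm_nonneg y).lt_of_ne' hy
      have h1 := (abs_nonneg _).trans (h y y)
      have : nrm (0 : Fin n → ℝ) = 0 := by simp [nrm, sqNorm]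
      rw [this]
      by_contra hK
      push Not at hK
      nlinarith
  · have hp := nrm_pos h0
    have h1 := (le_abs_self _).trans (h (X *ᵥ y) y)
    rw [dot_self] at h1
    nlinarith

set_option maxHeartbeats 800000 in
/-- If `σ` lies on the prescribed side of `C` at distance of order `s`, then the left vector of
any pair of unit vectors `x`, `y` with `A y = σ x`, `Aᵀ x = σ y` is correlated with `u`. -/
lemma corr_of_pair {J : Finset (Fin n)} {η s σ : ℝ} (hs : 0 < s) (hη : η = 1 ∨ η = -1)
    {G : Matrix (Fin n) (Fin n) ℝ} {u v : Fin n → ℝ}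
    (hG : ∀ x y, x ⬝ᵥ (G *ᵥ y) ≤ s / 1000 * (nrm x * nrm y)) (hu : nrm u = 1) (hv : nrm v = 1)
    (hσ1 : 9 / 20 * s ≤ η * (σ - 10000 * s)) (hσ2 : η * (σ - 10000 * s) ≤ 2 * s)
    {x y : Fin n → ℝ} (hx : nrm x = 1) (hy : nrm y = 1)
    (h1 : planted J η s G u v *ᵥ y = σ • x) (h2 : (planted J η s G u v)ᵀ *ᵥ x = σ • y) :
    3 / 10 ≤ |x ⬝ᵥ u| := by
  have hXb := dot_spike_le hs hG hu hv
  have hXd := fun z => dot_spike s G u v z z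
  obtain ⟨X, hX⟩ : ∃ X, X = G + s • vecMulVec u v := ⟨_, rfl⟩
  rw [planted] at h1 h2
  rw [← hX] at hXb hXd h1 h2
  -- the two singular vector equations, tested against an arbitrary vector
  have e1 : ∀ w, σ * (w ⬝ᵥ x) = 10000 * s * (w ⬝ᵥ y) + η * (10000 * s) * (cut J w ⬝ᵥ cut J y)
      + w ⬝ᵥ (X *ᵥ y) := fun w => by
    have := congrArg (w ⬝ᵥ ·) h1
    simp only [add_mulVec, base_mulVec, dotProduct_add, dotProduct_smul,
      smul_eq_mul, dot_cut J w] at this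
    linarith
  have e2 : ∀ w, σ * (w ⬝ᵥ y) = 10000 * s * (w ⬝ᵥ x) + η * (10000 * s) * (cut J w ⬝ᵥ cut J x)
      + x ⬝ᵥ (X *ᵥ w) := fun w => by
    have := congrArg (w ⬝ᵥ ·) h2
    have h3 : w ⬝ᵥ (Xᵀ *ᵥ x) = x ⬝ᵥ (X *ᵥ w) := by
      rw [mulVec_transpose, dotProduct_comm, dotProduct_mulVec]
    have h4 : (base J η s)ᵀ = base J η s := by simp [base]
    simp only [transpose_add, h4, add_mulVec, base_mulVec, dotProduct_add,
      dotProduct_smul, smul_eq_mul, dot_cut J w, h3] at this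
    linarith
  have hσ : 9998 * s ≤ σ := by rcases hη with rfl | rfl <;> nlinarith
  -- the two vectors nearly coincide
  have hd : nrm (x - y) ≤ 1 / 2000 := by
    have a1 := e1 (x - y)
    have a2 := e2 (x - y)
    have a3 : (x - y) ⬝ᵥ (x - y) = (x - y) ⬝ᵥ x - (x - y) ⬝ᵥ y := dotProduct_sub _ _ _
    have a4 : cut J (x - y) ⬝ᵥ cut J (x - y)
        = cut J (x - y) ⬝ᵥ cut J x - cut J (x - y) ⬝ᵥ cut J y := by
      rw [← dotProduct_sub, ← cut_sub]
    rw [dot_self] at a3 a4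
    have a5 : nrm (cut J (x - y)) ^ 2 ≤ nrm (x - y) ^ 2 :=
      pow_le_pow_left₀ (nrm_nonneg _) (nrm_cut_le J _) 2
    have b1 := abs_le.1 (hXb (x - y) y)
    have b2 := abs_le.1 (hXb x (x - y))
    rw [hy] at b1
    rw [hx] at b2
    have hn := nrm_nonneg (x - y)
    have key : σ * nrm (x - y) ^ 2 ≤ 4 * s * nrm (x - y) := by
      have : σ * nrm (x - y) ^ 2 = -(10000 * s) * (nrm (x - y) ^ 2
          + η * nrm (cut J (x - y)) ^ 2) + ((x - y) ⬝ᵥ (X *ᵥ y) - x ⬝ᵥ (X *ᵥ (x - y))) := by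
        rw [a3, a4]; linear_combination a1 - a2
      have a6 : 0 ≤ s * (nrm (x - y) ^ 2 + η * nrm (cut J (x - y)) ^ 2) := by
        refine mul_nonneg hs.le ?_
        rcases hη with rfl | rfl <;> nlinarith [sq_nonneg (nrm (cut J (x - y)))]
      nlinarith
    by_contra hc
    push Not at hc
    have : 9998 * s * nrm (x - y) ^ 2 ≤ 4 * s * nrm (x - y) :=
      le_trans (mul_le_mul_of_nonneg_right hσ (sq_nonneg _)) key
    have h9 : 0 < s * nrm (x - y) := by positivity
    nlinarith
  have hE : nrm (cut J (x + y)) ≤ 1 / 2000 := by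
    have a1 := e1 (cut J (x + y))
    have a2 := e2 (cut J (x + y))
    rw [cut_cut] at a1 a2
    rw [cut_dot J _ x, cut_dot J _ y] at a1
    rw [cut_dot J _ x, cut_dot J _ y] at a2
    have a4 : cut J (x + y) ⬝ᵥ cut J (x + y)
        = cut J (x + y) ⬝ᵥ cut J x + cut J (x + y) ⬝ᵥ cut J y := by
      rw [← dotProduct_add, ← cut_add]
    rw [dot_self] at a4
    have b1 := abs_le.1 (hXb (cut J (x + y)) y)
    have b2 := abs_le.1 (hXb x (cut J (x + y)))
    rw [hy] at b1
    rw [hx] at b2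
    have hn := nrm_nonneg (cut J (x + y))
    have key : 9998 * s * nrm (cut J (x + y)) ^ 2 ≤ 4 * s * nrm (cut J (x + y)) := by
      have : (10000 * s + η * (10000 * s) - σ) * nrm (cut J (x + y)) ^ 2 =
          - (cut J (x + y) ⬝ᵥ (X *ᵥ y) + x ⬝ᵥ (X *ᵥ (cut J (x + y)))) := by
        rw [a4]; linear_combination -a1 - a2
      have hq := sq_nonneg (nrm (cut J (x + y)))
      rcases hη with rfl | rfl <;> nlinarith
    by_contra hc
    push Not at hc
    have h9 : 0 < s * nrm (cut J (x + y)) := by positivity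
    nlinarith
  have a1 := e1 (x + y)
  have a2 := e2 (x + y)
  have a3 : (x + y) ⬝ᵥ (x + y) = (x + y) ⬝ᵥ x + (x + y) ⬝ᵥ y := dotProduct_add _ _ _
  have a4 : cut J (x + y) ⬝ᵥ cut J (x + y)
      = cut J (x + y) ⬝ᵥ cut J x + cut J (x + y) ⬝ᵥ cut J y := by
    rw [← dotProduct_add, ← cut_add]
  rw [dot_self] at a3 a4
  have par : nrm (x + y) ^ 2 + nrm (x - y) ^ 2 = 4 := by
    rw [← dot_self, ← dot_self, add_dotProduct, dotProduct_add, dotProduct_add, sub_dotProduct,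
      dotProduct_sub, dotProduct_sub, dot_self x, dot_self y, hx, hy]
    ring
  have hz2 : nrm (x + y) ≤ 2 := by
    nlinarith [nrm_nonneg (x + y), sq_nonneg (nrm (x - y))]
  have key : (σ - 10000 * s) * nrm (x + y) ^ 2 = η * (10000 * s) * nrm (cut J (x + y)) ^ 2
      + ((x + y) ⬝ᵥ (X *ᵥ y) + x ⬝ᵥ (X *ᵥ (x + y))) := by
    rw [a3, a4]; linear_combination a1 + a2
  have pol : 2 * ((x + y) ⬝ᵥ (X *ᵥ y) + x ⬝ᵥ (X *ᵥ (x + y))) = 2 * ((x + y) ⬝ᵥ (X *ᵥ (x + y)))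
      + ((x - y) ⬝ᵥ (X *ᵥ (x + y)) - (x + y) ⬝ᵥ (X *ᵥ (x - y))) := by
    simp only [mulVec_add, mulVec_sub, dotProduct_add, add_dotProduct, dotProduct_sub,
      sub_dotProduct]
    ring
  have b1 := abs_le.1 (hXb (x - y) (x + y))
  have b2 := abs_le.1 (hXb (x + y) (x - y))
  have hdz : nrm (x - y) * nrm (x + y) ≤ 1 / 1000 := by
    have := mul_le_mul hd hz2 (nrm_nonneg _) (by norm_num)
    linarith
  have hdz' : nrm (x + y) * nrm (x - y) ≤ 1 / 1000 := by rw [mul_comm]; exact hdz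
  have hE2 : nrm (cut J (x + y)) ^ 2 ≤ 1 / 4000000 := by
    have := pow_le_pow_left₀ (nrm_nonneg _) hE 2
    norm_num at this ⊢
    exact this
  have hd2 : nrm (x - y) ^ 2 ≤ 1 / 4000000 := by
    have := pow_le_pow_left₀ (nrm_nonneg _) hd 2
    norm_num at this ⊢
    exact this
  have c1 := hG (x + y) (x + y)
  have c2 := hG (-(x + y)) (x + y)
  rw [neg_dotProduct, nrm_neg] at c2
  rw [hXd] at pol
  have hzz : nrm (x + y) * nrm (x + y) ≤ 4 := by nlinarith [nrm_nonneg (x + y)]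
  have m1 : s / 1000 * (nrm (x + y) * nrm (x + y)) ≤ s / 1000 * 4 := by gcongr
  have m2 : 2 * s * (nrm (x - y) * nrm (x + y)) ≤ 2 * s * (1 / 1000) := by gcongr
  have m3 : 2 * s * (nrm (x + y) * nrm (x - y)) ≤ 2 * s * (1 / 1000) := by gcongr
  have m4 : s * nrm (cut J (x + y)) ^ 2 ≤ s * (1 / 4000000) := by gcongr
  have m5 : 9 / 20 * s * (4 - 1 / 4000000) ≤ η * (σ - 10000 * s) * nrm (x + y) ^ 2 := by
    refine mul_le_mul hσ1 (by linarith) (by norm_num) (le_trans (by positivity) hσ1)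
  have low : 17 / 10 ≤ |((x + y) ⬝ᵥ u) * (v ⬝ᵥ (x + y))| := by
    rcases hη with rfl | rfl
    · refine le_trans ?_ (le_abs_self _)
      have : s * (17 / 10) ≤ s * (((x + y) ⬝ᵥ u) * (v ⬝ᵥ (x + y))) := by linarith
      exact le_of_mul_le_mul_left this hs
    · refine le_trans ?_ (neg_le_abs _)
      have : s * (17 / 10) ≤ s * -(((x + y) ⬝ᵥ u) * (v ⬝ᵥ (x + y))) := by linarith
      exact le_of_mul_le_mul_left this hs
  have hv2 := abs_dot_le v (x + y)
  rw [hv, one_mul] at hv2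
  have hu2 := abs_dot_le (x - y) u
  rw [hu, mul_one] at hu2
  rw [abs_mul] at low
  have h17 : 17 / 20 ≤ |(x + y) ⬝ᵥ u| := by
    have := mul_le_mul_of_nonneg_left (hv2.trans hz2) (abs_nonneg ((x + y) ⬝ᵥ u))
    linarith
  have hxu : 2 * (x ⬝ᵥ u) = (x + y) ⬝ᵥ u + (x - y) ⬝ᵥ u := by
    rw [add_dotProduct, sub_dotProduct]; ring
  have h18 : |(x + y) ⬝ᵥ u| ≤ |2 * (x ⬝ᵥ u)| + |(x - y) ⬝ᵥ u| := by
    have : (x + y) ⬝ᵥ u = 2 * (x ⬝ᵥ u) - (x - y) ⬝ᵥ u := by rw [hxu]; ring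
    rw [this]; exact abs_sub _ _
  rw [abs_mul, abs_two] at h18
  linarith

/-- Extension by zero of a vector indexed by `{a // p a}`. -/
def ext (p : Fin n → Prop) : ({a // p a} → ℝ) →ₗ[ℝ] (Fin n → ℝ) where
  toFun f a := if h : p a then f ⟨a, h⟩ else 0
  map_add' f g := by funext a; simp only [Pi.add_apply]; split_ifs <;> simp
  map_smul' c f := by funext a; simp only [Pi.smul_apply]; split_ifs <;> simp

/-- Parametrization of the span of the coordinate vectors outside `J` and of `w`. -/
def extw (J : Finset (Fin n)) (w : Fin n → ℝ) : (({a // a ∉ J} → ℝ) × ℝ) →ₗ[ℝ] (Fin n → ℝ) :=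
  (ext fun a => a ∉ J).coprod (LinearMap.toSpanSingleton ℝ _ w)

lemma ext_apply (p : Fin n → Prop) (f : {a // p a} → ℝ) (a : Fin n) :
    ext p f a = if h : p a then f ⟨a, h⟩ else 0 := rfl

lemma extw_apply (J : Finset (Fin n)) (w : Fin n → ℝ) (f : ({a // a ∉ J} → ℝ) × ℝ) :
    extw J w f = ext (fun a => a ∉ J) f.1 + f.2 • w := rfl

lemma ext_injective (p : Fin n → Prop) : Function.Injective (ext (n := n) p) := by
  intro f g h
  funext a
  have := congrFun h a.1
  simpa [ext_apply, a.2] using this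

lemma extw_injective {J : Finset (Fin n)} {w : Fin n → ℝ} (hw : nrm w = 1)
    (hwJ : ∀ a ∉ J, w a = 0) : Function.Injective (extw J w) := by
  obtain ⟨b, hb⟩ : ∃ b, w b ≠ 0 := by
    by_contra hc
    push Not at hc
    have : w = 0 := funext hc
    rw [this] at hw
    simp [nrm, sqNorm] at hw
  have hbJ : b ∈ J := by
    by_contra h
    exact hb (hwJ b h)
  rw [injective_iff_map_eq_zero]
  rintro ⟨f, β⟩ h
  rw [extw_apply] at h
  have hβ : β = 0 := by
    have := congrFun h b
    simpa [ext_apply, hbJ, hb] using this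
  subst hβ
  have hf : ext (fun a => a ∉ J) f = ext (fun a => a ∉ J) 0 := by
    simpa using h
  rw [ext_injective _ hf]
  rfl

lemma finrank_ext (J : Finset (Fin n)) : Module.finrank ℝ ({a // a ∉ J} → ℝ) = n - J.card := by
  rw [Module.finrank_fintype_fun_eq_card, Fintype.card_subtype_compl]
  simp

lemma finrank_extw (J : Finset (Fin n)) :
    Module.finrank ℝ (({a // a ∉ J} → ℝ) × ℝ) = n - J.card + 1 := by
  rw [Module.finrank_prod, finrank_ext, Module.finrank_self]

section data
variable {J : Finset (Fin n)} {s : ℝ} {G : Matrix (Fin n) (Fin n) ℝ} {u v w : Fin n → ℝ}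

lemma dot_disjoint {e w : Fin n → ℝ} (he : ∀ a ∈ J, e a = 0) (hw : ∀ a ∉ J, w a = 0) :
    e ⬝ᵥ w = 0 := by
  refine Finset.sum_eq_zero fun a _ => ?_
  by_cases h : a ∈ J
  · rw [he a h, zero_mul]
  · rw [hw a h, mul_zero]

lemma cut_eq_self {e : Fin n → ℝ} (he : ∀ a ∈ J, e a = 0) : cut J e = e := by
  funext a; simp only [cut]; split_ifs with h
  · rw [he a h]
  · rfl

lemma cut_eq_zero {w : Fin n → ℝ} (hw : ∀ a ∉ J, w a = 0) : cut J w = 0 := by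
  funext a; simp only [cut]; split_ifs with h
  · rfl
  · exact hw a h

lemma nrm_sq_add {e w : Fin n → ℝ} (h : e ⬝ᵥ w = 0) (hw : nrm w = 1) (β : ℝ) :
    nrm (e + β • w) ^ 2 = nrm e ^ 2 + β ^ 2 := by
  rw [← dot_self, add_dotProduct, dotProduct_add, dotProduct_add, smul_dotProduct,
    dotProduct_smul, smul_dotProduct, dotProduct_smul, dotProduct_comm w e, h, dot_self, dot_self,
    hw]
  simp; ring

lemma ext_mem_eq_zero (f : {a // a ∉ J} → ℝ) : ∀ a ∈ J, ext (fun a => a ∉ J) f a = 0 := by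
  intro a ha; simp [ext_apply, ha]

/-- Lower bound on the singular value when the diagonal is doubled outside `J`. -/
lemma le_singVal_pos (hs : 0 < s) (i : ℕ) (hi : 1 ≤ i) (hJ : n - J.card + 1 = i)
    (hG : ∀ x y, x ⬝ᵥ (G *ᵥ y) ≤ s / 1000 * (nrm x * nrm y))
    (huJ : ∀ a ∉ J, u a = 0) (hvJ : ∀ a ∉ J, v a = 0) (hwJ : ∀ a ∉ J, w a = 0)
    (hw : nrm w = 1) (huw : (w ⬝ᵥ u) * (v ⬝ᵥ w) = 1 / 2) :
    10000 * s + 9 / 20 * s ≤ singVal (planted J 1 s G u v) i := by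
  refine le_singVal _ i hi (extw J w) (extw_injective hw hwJ) (by rw [finrank_extw, hJ]) ?_
  intro f
  set x := extw J w f with hx
  rw [extw_apply] at hx
  set e := ext (fun a => a ∉ J) f.1 with he
  have heJ : ∀ a ∈ J, e a = 0 := ext_mem_eq_zero f.1
  have hN : nrm x ^ 2 = nrm e ^ 2 + f.2 ^ 2 := by
    rw [hx]; exact nrm_sq_add (dot_disjoint heJ hwJ) hw _
  have h1 := dot_le x (planted J 1 s G u v *ᵥ x)
  have h2 := hG (-x) x
  rw [neg_dotProduct, nrm_neg] at h2
  have hcut : cut J x = e := by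
    rw [hx, cut_add, cut_eq_self heJ, cut_eq_zero (w := f.2 • w) (fun a ha => by simp [hwJ a ha]),
      add_zero]
  have hxu : x ⬝ᵥ u = f.2 * (w ⬝ᵥ u) := by
    rw [hx, add_dotProduct, dot_disjoint heJ huJ, smul_dotProduct, zero_add, smul_eq_mul]
  have hxv : v ⬝ᵥ x = f.2 * (v ⬝ᵥ w) := by
    rw [hx, dotProduct_add, dotProduct_comm, dot_disjoint heJ hvJ, dotProduct_smul, zero_add,
      smul_eq_mul]
  have hdot : x ⬝ᵥ (planted J 1 s G u v *ᵥ x) = 10000 * s * nrm x ^ 2 + 10000 * s * nrm e ^ 2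
      + (x ⬝ᵥ (G *ᵥ x) + s * (f.2 ^ 2 * (1 / 2))) := by
    rw [planted, add_mulVec, dotProduct_add, dot_spike, base_mulVec, dotProduct_add,
      dotProduct_smul, dotProduct_smul, dot_cut, hcut, dot_self, dot_self, hxu, hxv, smul_eq_mul,
      smul_eq_mul, ← huw]
    ring
  rw [hdot] at h1
  by_cases h0 : nrm x = 0
  · rw [h0, mul_zero]; exact nrm_nonneg _
  have hp : 0 < nrm x := (nrm_nonneg x).lt_of_ne' h0
  refine le_of_mul_le_mul_left (le_trans ?_ h1) hp
  have h3 : 0 ≤ s * nrm e ^ 2 := by positivity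
  have h4 : 0 ≤ s * f.2 ^ 2 := by positivity
  have h5 : s * nrm x ^ 2 = s * nrm e ^ 2 + s * f.2 ^ 2 := by rw [hN]; ring
  nlinarith

/-- Upper bound on the singular value when the diagonal is doubled outside `J`: the excess of the
diagonal outside `J` has rank `i - 1`. -/
lemma singVal_pos_le (hs : 0 < s) (i : ℕ) (hJ : n - J.card + 1 = i)
    (hG : ∀ x y, x ⬝ᵥ (G *ᵥ y) ≤ s / 1000 * (nrm x * nrm y)) (hu : nrm u = 1) (hv : nrm v = 1) :
    singVal (planted J 1 s G u v) i ≤ 10000 * s + 2 * s := by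
  have hJn : J.card ≤ n := by simpa using J.card_le_univ
  refine singVal_le _ (Matrix.diagonal fun a => if a ∈ J then 0 else 10000 * s) i ?_
    (by positivity) ?_
  · have := rank_add_le (Matrix.diagonal fun a => if a ∈ J then 0 else 10000 * s)
      (ext (fun a => a ∈ J)) (ext_injective _) (fun f => by
        funext a; simp only [mulVec_diagonal, ext_apply]; split_ifs <;> simp)
    rw [Module.finrank_fintype_fun_eq_card, Fintype.card_coe] at this
    omega
  · intro x
    have : (planted J 1 s G u v - Matrix.diagonal fun a => if a ∈ J then 0 else 10000 * s) *ᵥ x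
        = (10000 * s) • x + (G + s • vecMulVec u v) *ᵥ x := by
      rw [sub_mulVec, planted, add_mulVec, base_mulVec]
      funext a
      simp only [mulVec_diagonal, Pi.sub_apply, Pi.add_apply, Pi.smul_apply, cut, smul_eq_mul]
      split_ifs <;> ring
    rw [this]
    refine (nrm_add_le _ _).trans ?_
    rw [nrm_smul, abs_of_pos (by positivity)]
    linarith [nrm_mulVec_le (dot_spike_le hs hG hu hv) x]

/-- Lower bound on the singular value when the diagonal vanishes outside `J`: the diagonal acts as
a multiple of the identity on the `i` coordinates of `J`. -/
lemma le_singVal_neg (hs : 0 < s) (i : ℕ) (hi : 1 ≤ i) (hJ : J.card = i)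
    (hG : ∀ x y, x ⬝ᵥ (G *ᵥ y) ≤ s / 1000 * (nrm x * nrm y)) (hu : nrm u = 1) (hv : nrm v = 1) :
    10000 * s - 2 * s ≤ singVal (planted J (-1) s G u v) i := by
  refine le_singVal _ i hi (ext (fun a => a ∈ J)) (ext_injective _) ?_ ?_
  · rw [Module.finrank_fintype_fun_eq_card, Fintype.card_coe, hJ]
  intro f
  set x := ext (fun a => a ∈ J) f
  have hx : cut J x = 0 := cut_eq_zero fun a ha => by simp [x, ext_apply, ha]
  rw [planted, add_mulVec, base_mulVec, hx, smul_zero, add_zero]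
  have h1 := nrm_sub_le ((10000 * s) • x + (G + s • vecMulVec u v) *ᵥ x)
    ((G + s • vecMulVec u v) *ᵥ x)
  rw [add_sub_cancel_right, nrm_smul, abs_of_pos (by positivity)] at h1
  linarith [nrm_mulVec_le (dot_spike_le hs hG hu hv) x]

/-- Upper bound on the singular value when the diagonal vanishes outside `J`. -/
lemma singVal_neg_le (hs : 0 < s) (i : ℕ) (hJ : J.card = i)
    (hG : ∀ x y, x ⬝ᵥ (G *ᵥ y) ≤ s / 1000 * (nrm x * nrm y)) (hu : nrm u = 1) (hv : nrm v = 1)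
    (hvJ : ∀ a ∉ J, v a = 0) (hwJ : ∀ a ∉ J, w a = 0)
    (hw : nrm w = 1) (huw : (w ⬝ᵥ u) * (v ⬝ᵥ w) = -1 / 2) :
    singVal (planted J (-1) s G u v) i ≤ 10000 * s - 9 / 20 * s := by
  have hJn : J.card ≤ n := by simpa using J.card_le_univ
  -- `M` is the projection onto the complement of the space parametrized by `extw J w`
  set M : Matrix (Fin n) (Fin n) ℝ :=
    Matrix.diagonal (fun a => if a ∈ J then 1 else 0) - vecMulVec w w with hM
  have hMx : ∀ x, x - M *ᵥ x = cut J x + (w ⬝ᵥ x) • w := fun x => by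
    rw [hM, sub_mulVec, vecMulVec_mulVec]
    funext a
    simp only [mulVec_diagonal, Pi.sub_apply, Pi.add_apply, Pi.smul_apply, cut, smul_eq_mul,
      op_smul_eq_smul]
    split_ifs <;> ring
  have hMr : M.rank + (n - J.card + 1) ≤ n := by
    rw [← finrank_extw]
    refine rank_add_le M (extw J w) (extw_injective hw hwJ) fun f => ?_
    have := hMx (extw J w f)
    rw [extw_apply, cut_add, cut_eq_self (ext_mem_eq_zero f.1),
      cut_eq_zero (w := f.2 • w) (fun a ha => by simp [hwJ a ha]), dotProduct_add,
      dotProduct_comm w, dot_disjoint (ext_mem_eq_zero f.1) hwJ, dotProduct_smul, dot_self, hw]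
      at this
    simp at this
    rw [extw_apply]
    simpa using this
  refine singVal_le _ (planted J (-1) s G u v * M) i ?_ (by linarith) fun x => ?_
  · have := rank_mul_le_right (planted J (-1) s G u v) M
    omega
  rw [sub_mulVec, ← mulVec_mulVec, ← mulVec_sub, hMx]
  set β := w ⬝ᵥ x
  set e := cut J x with he
  have heJ : ∀ a ∈ J, e a = 0 := fun a ha => by simp [he, cut, ha]
  have hN : nrm (e + β • w) ^ 2 = nrm e ^ 2 + β ^ 2 := nrm_sq_add (dot_disjoint heJ hwJ) hw _
  have hNx : nrm (e + β • w) ^ 2 ≤ nrm x ^ 2 := by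
    have h1 : x ⬝ᵥ (e + β • w) = nrm e ^ 2 + β ^ 2 := by
      rw [dotProduct_add, he, dot_cut, dot_self, dotProduct_smul, dotProduct_comm x w, smul_eq_mul]
      ring
    have h2 := dot_sq_le x (e + β • w)
    rw [h1, ← hN, ← nrm_sq, ← nrm_sq] at h2
    by_contra hc
    push Not at hc
    have := sq_nonneg (nrm x)
    nlinarith
  set p := e + β • w with hp
  have hpp := nrm_nonneg p
  have hcut : cut J p = e := by
    rw [hp, cut_add, cut_eq_self heJ, cut_eq_zero (w := β • w) (fun a ha => by simp [hwJ a ha]),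
      add_zero]
  have hAp : planted J (-1) s G u v *ᵥ p
      = (10000 * s * β) • w + (G + s • vecMulVec u v) *ᵥ p := by
    rw [planted, add_mulVec, base_mulVec, hcut, hp]
    congr 1
    rw [smul_add, smul_smul, neg_mul, one_mul, neg_smul]
    abel
  have hXp := nrm_mulVec_le (dot_spike_le hs hG hu hv) p
  have hvp : v ⬝ᵥ p = β * (v ⬝ᵥ w) := by
    rw [hp, dotProduct_add, dotProduct_comm, dot_disjoint heJ hvJ, dotProduct_smul, zero_add,
      smul_eq_mul]
  have hwX := dot_spike s G u v w p
  rw [hvp, show (w ⬝ᵥ u) * (β * (v ⬝ᵥ w)) = β * ((w ⬝ᵥ u) * (v ⬝ᵥ w)) by ring, huw] at hwX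
  have hwG := hG w p
  have hwG' := hG (-w) p
  rw [neg_dotProduct, nrm_neg] at hwG'
  rw [hw, one_mul] at hwG hwG'
  have hβ : |β| ≤ nrm p := abs_le_of_sq_le_sq (by rw [hN]; nlinarith [sq_nonneg (nrm e)]) hpp
  have hsq : nrm (planted J (-1) s G u v *ᵥ p) ^ 2 ≤ ((10000 * s - 9 / 20 * s) * nrm p) ^ 2 := by
    set Y := (G + s • vecMulVec u v) *ᵥ p
    have hexp : nrm (planted J (-1) s G u v *ᵥ p) ^ 2
        = (10000 * s * β) ^ 2 + 2 * (10000 * s * β) * (w ⬝ᵥ Y) + nrm Y ^ 2 := by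
      rw [hAp, ← dot_self, add_dotProduct, dotProduct_add, dotProduct_add, smul_dotProduct,
        smul_dotProduct, dotProduct_smul, dotProduct_smul, dot_self w, dot_self Y, hw,
        dotProduct_comm Y w]
      simp only [smul_eq_mul]
      ring
    have hY : nrm Y ^ 2 ≤ (2 * s * nrm p) ^ 2 := pow_le_pow_left₀ (nrm_nonneg _) hXp 2
    have hβG : β * (w ⬝ᵥ (G *ᵥ p)) ≤ s / 1000 * nrm p ^ 2 := by
      have h1 : |w ⬝ᵥ (G *ᵥ p)| ≤ s / 1000 * nrm p := abs_le.2 ⟨by linarith, hwG⟩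
      have h2 := mul_le_mul hβ h1 (abs_nonneg _) hpp
      rw [← abs_mul] at h2
      have h3 := (le_abs_self _).trans h2
      nlinarith
    have hβG' := mul_le_mul_of_nonneg_left hβG hs.le
    have hβ2 : s ^ 2 * β ^ 2 ≤ s ^ 2 * nrm p ^ 2 := by
      have : β ^ 2 ≤ nrm p ^ 2 := by rw [hN]; nlinarith [sq_nonneg (nrm e)]
      gcongr
    have hsp : 0 ≤ s ^ 2 * nrm p ^ 2 := by positivity
    rw [hexp, hwX]
    nlinarith
  have h1 : nrm (planted J (-1) s G u v *ᵥ p) ≤ (10000 * s - 9 / 20 * s) * nrm p :=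
    le_of_sq_le_sq hsq (mul_nonneg (by linarith) hpp)
  exact h1.trans (mul_le_mul_of_nonneg_left (le_of_sq_le_sq hNx (nrm_nonneg x)) (by linarith))

/-- The left member of an `i`-th singular pair of the planted matrix is correlated with `u`, and
so is every unit vector close to it. The set `J` has `n - i + 1` elements when the diagonal is
doubled outside `J`, and `i` elements when the diagonal vanishes there. -/
lemma corr_of_singVal {η : ℝ} (hs : 0 < s) (i : ℕ) (hi : 1 ≤ i)
    (hJ : (η = 1 ∧ n - J.card + 1 = i) ∨ (η = -1 ∧ J.card = i))
    (hG : ∀ x y, x ⬝ᵥ (G *ᵥ y) ≤ s / 1000 * (nrm x * nrm y)) (hu : nrm u = 1) (hv : nrm v = 1)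
    (huv : u ⬝ᵥ v = 0) (huJ : ∀ a ∉ J, u a = 0) (hvJ : ∀ a ∉ J, v a = 0)
    {x y x' : Fin n → ℝ} (hx : nrm x = 1) (hy : nrm y = 1)
    (h1 : planted J η s G u v *ᵥ y = singVal (planted J η s G u v) i • x)
    (h2 : (planted J η s G u v)ᵀ *ᵥ x = singVal (planted J η s G u v) i • y)
    (hx' : nrm (x' - x) ≤ 1 / 10) : 1 / 5 ≤ |x' ⬝ᵥ u| := by
  have h3 : 3 / 10 ≤ |x ⬝ᵥ u| := by
    have hη2 : η * η = 1 := by rcases hJ with ⟨rfl, _⟩ | ⟨rfl, _⟩ <;> norm_num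
    set w := (√2)⁻¹ • (u + η • v) with hwdef
    have h22 : (√2)⁻¹ * (√2)⁻¹ = 1 / 2 := by
      rw [← mul_inv, Real.mul_self_sqrt (by norm_num)]; norm_num
    have hvu : v ⬝ᵥ u = 0 := by rw [dotProduct_comm, huv]
    have hwJ : ∀ a ∉ J, w a = 0 := fun a ha => by simp [hwdef, huJ a ha, hvJ a ha]
    have hw : nrm w = 1 := by
      have : nrm w ^ 2 = 1 := by
        rw [← dot_self, hwdef]
        simp only [smul_dotProduct, dotProduct_smul, add_dotProduct, dotProduct_add, huv, hvu,
          dot_self, hu, hv, smul_eq_mul]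
        linear_combination h22 * (1 + η * η) + hη2 / 2
      exact (pow_eq_one_iff_of_nonneg (nrm_nonneg w) two_ne_zero).1 this
    have huw : (w ⬝ᵥ u) * (v ⬝ᵥ w) = η / 2 := by
      rw [hwdef]
      simp only [smul_dotProduct, dotProduct_smul, add_dotProduct, dotProduct_add, hvu,
        dot_self, hu, hv, smul_eq_mul]
      linear_combination h22 * η
    refine corr_of_pair hs (hJ.imp And.left And.left) hG hu hv ?_ ?_ hx hy h1 h2
    · rcases hJ with ⟨rfl, hJ⟩ | ⟨rfl, hJ⟩
      · linarith [le_singVal_pos hs i hi hJ hG huJ hvJ hwJ hw huw]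
      · linarith [singVal_neg_le hs i hJ hG hu hv hvJ hwJ hw huw]
    · rcases hJ with ⟨rfl, hJ⟩ | ⟨rfl, hJ⟩
      · linarith [singVal_pos_le hs i hJ hG hu hv]
      · linarith [le_singVal_neg hs i hi hJ hG hu hv]
  have h4 := abs_dot_le (x' - x) u
  rw [hu, mul_one, sub_dotProduct] at h4
  have h5 : |x ⬝ᵥ u| ≤ |x' ⬝ᵥ u| + |x' ⬝ᵥ u - x ⬝ᵥ u| := by
    have : x ⬝ᵥ u = x' ⬝ᵥ u - (x' ⬝ᵥ u - x ⬝ᵥ u) := by ring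
    calc |x ⬝ᵥ u| = |x' ⬝ᵥ u - (x' ⬝ᵥ u - x ⬝ᵥ u)| := by rw [← this]
      _ ≤ _ := abs_sub _ _
  linarith
end data
end plant

end SVLB

namespace SVLB

/-! ### Round-by-round information bound -/

section rounds
variable {N k t : ℕ}

/-- The algorithm stopped after its first `j` rounds. -/
def trunc (Q : QueryMaps N k t) (j : ℕ) (hj : j ≤ t) : QueryMaps N k j :=
  fun l h => Q ⟨l.1, l.2.trans_le hj⟩ h

lemma trunc_valid {Q : QueryMaps N k t} (hQ : Q.Valid) (j : ℕ) (hj : j ≤ t) :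
    (trunc Q j hj).Valid := by
  obtain ⟨h1, h2, h3⟩ := hQ
  exact ⟨fun l => h1 ⟨l.1, l.2.trans_le hj⟩, fun l => h2 ⟨l.1, l.2.trans_le hj⟩,
    fun l i hil h => h3 ⟨l.1, l.2.trans_le hj⟩ ⟨i.1, i.2.trans_le hj⟩ hil h⟩

lemma resp_trunc (Q : QueryMaps N k t) (j : ℕ) (hj : j ≤ t) (a : Fin N → ℝ) :
    ∀ (m : ℕ) (hm : m < j), QueryMaps.resp (trunc Q j hj) a ⟨m, hm⟩
      = QueryMaps.resp Q a ⟨m, hm.trans_le hj⟩ := by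
  intro m
  induction m using Nat.strong_induction_on with
  | _ m ih =>
    intro hm
    rw [QueryMaps.resp, QueryMaps.resp]
    have : (fun i : Fin m => QueryMaps.resp (trunc Q j hj) a ⟨i.1, i.isLt.trans hm⟩)
        = fun i : Fin m => QueryMaps.resp Q a ⟨i.1, (i.isLt.trans hm).trans_le hj⟩ :=
      funext fun i => ih i.1 i.2 _
    simp only [trunc]
    congr 2

/-- Averaged change of measure: if no transcript lies in more than a fraction `κ` of the events
`B p`, then the same is nearly true for the transcripts of inputs planted with `w p`. -/
lemma sum_change {S : Type*} [Fintype S] {Q : QueryMaps N k t} (hQ : Q.Valid) (a : Fin N → ℝ)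
    (w : S → Fin N → ℝ) (s T y κ : ℝ) (hκ : 0 ≤ κ) (B : S → Set (Fin t → Fin k → ℝ))
    (hB : ∀ p, MeasurableSet (B p)) (hT : ∀ p, ∀ x ∈ B p, sqNorm (stack Q x *ᵥ w p) ≤ T)
    (hc : ∀ x, ((Finset.univ.filter fun p => x ∈ B p).card : ℝ) ≤ Fintype.card S * κ) :
    ∑ p, gau (Fin N) {g | QueryMaps.resp Q (a + s • w p + g) ∈ B p}
      ≤ Fintype.card S * ENNReal.ofReal (Real.exp (-y) + Real.exp (s ^ 2 * T + y) * κ) := by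
  have hm : ∀ p, MeasurableSet {g | QueryMaps.resp Q (a + g) ∈ B p} := fun p =>
    ((measurable_resp_fixed hQ).comp (measurable_const_add a)) (hB p)
  have h0 : ∑ p, gau (Fin N) {g | QueryMaps.resp Q (a + g) ∈ B p}
      ≤ ENNReal.ofReal (Fintype.card S * κ) := by
    have h1 : ∀ p, gau (Fin N) {g | QueryMaps.resp Q (a + g) ∈ B p}
        = ∫⁻ g, {g | QueryMaps.resp Q (a + g) ∈ B p}.indicator (fun _ => 1) g ∂gau (Fin N) := by
      intro p
      rw [lintegral_indicator (hm p)]; simp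
    simp_rw [h1]
    rw [← lintegral_finsetSum _ (fun p _ => measurable_const.indicator (hm p))]
    calc _ ≤ ∫⁻ _, ENNReal.ofReal (Fintype.card S * κ) ∂gau (Fin N) := by
          refine lintegral_mono fun g => ?_
          have := hc (QueryMaps.resp Q (a + g))
          rw [← ENNReal.ofReal_le_ofReal_iff (by positivity), ENNReal.ofReal_natCast] at this
          refine le_trans (le_of_eq ?_) this
          rw [Finset.card_filter]
          push_cast
          refine Finset.sum_congr rfl fun p _ => ?_
          simp [Set.indicator]
      _ = _ := by simp
  calc _ ≤ ∑ p, (ENNReal.ofReal (Real.exp (-y)) + ENNReal.ofReal (Real.exp (s ^ 2 * T + y))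
        * gau (Fin N) {g | QueryMaps.resp Q (a + g) ∈ B p}) :=
        Finset.sum_le_sum fun p _ => change_of_measure hQ a (w p) s T y (B p) (hB p) (hT p)
    _ = Fintype.card S * ENNReal.ofReal (Real.exp (-y)) + ENNReal.ofReal (Real.exp (s ^ 2 * T + y))
        * ∑ p, gau (Fin N) {g | QueryMaps.resp Q (a + g) ∈ B p} := by
        rw [Finset.sum_add_distrib, Finset.mul_sum]; simp
    _ ≤ Fintype.card S * ENNReal.ofReal (Real.exp (-y))
        + ENNReal.ofReal (Real.exp (s ^ 2 * T + y)) * ENNReal.ofReal (Fintype.card S * κ) := by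
        gcongr
    _ = _ := by
        rw [ENNReal.ofReal_add (Real.exp_pos _).le (by positivity),
          ENNReal.ofReal_mul (Real.exp_pos _).le, ENNReal.ofReal_mul (by positivity),
          ENNReal.ofReal_natCast]
        ring

lemma measurable_sqNorm_query {Q : QueryMaps N k t} (hQ : Q.Valid) (j : Fin t) (w : Fin N → ℝ) :
    Measurable fun h => sqNorm (Q j h *ᵥ w) := by
  have := hQ.1 j
  unfold sqNorm mulVec dotProduct
  fun_prop

/-- For a fixed algorithm, averaged over the plants `w p`, the output `o` is rarely correlated
with the direction `u p`: either some round is the first to see more than `τ j` of the squared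
mass of `w p`, or all rounds together see too little to distinguish `w p` from no plant. -/
lemma round_bound {n : ℕ} {S : Type*} [Fintype S] {Q : QueryMaps N k t} (hQ : Q.Valid)
    (a : Fin N → ℝ) (w : S → Fin N → ℝ) (u : S → Fin n → ℝ) (s y ρ : ℝ) (τ κ : ℕ → ℝ) (κ' : ℝ)
    (hκ : ∀ j, 0 ≤ κ j) (hκ' : 0 ≤ κ')
    (o : (Fin t → Fin k → ℝ) → Fin n → ℝ) (ho : ∀ l, Measurable fun x => o x l)
    (hc : ∀ (M : Matrix (Fin k) (Fin N) ℝ), M * Mᵀ = 1 → ∀ j,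
      ((Finset.univ.filter fun p => τ j < sqNorm (M *ᵥ w p)).card : ℝ) ≤ Fintype.card S * κ j)
    (hc' : ∀ x : Fin n → ℝ, sqNorm x = 1 →
      ((Finset.univ.filter fun p => 1 / 5 ≤ |x ⬝ᵥ u p|).card : ℝ) ≤ Fintype.card S * κ')
    (hρ : ∀ j < t, Real.exp (-y) + Real.exp (s ^ 2 * (∑ l ∈ Finset.range j, τ l) + y) * κ j ≤ ρ)
    (hρ' : Real.exp (-y) + Real.exp (s ^ 2 * (∑ l ∈ Finset.range t, τ l) + y) * κ' ≤ ρ) :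
    ∑ p, gau (Fin N) {g | sqNorm (o (QueryMaps.resp Q (a + s • w p + g))) = 1 ∧
        1 / 5 ≤ |o (QueryMaps.resp Q (a + s • w p + g)) ⬝ᵥ u p|}
      ≤ Fintype.card S * ((t + 1) * ENNReal.ofReal ρ) := by
  -- the first `j` rounds see little of the plant
  let A : (j : ℕ) → j ≤ t → S → Set (Fin j → Fin k → ℝ) := fun j hj p =>
    {x | ∀ l : Fin j, sqNorm (Q ⟨l.1, l.2.trans_le hj⟩ (past x l) *ᵥ w p) ≤ τ l}
  have hAm : ∀ j hj p, MeasurableSet (A j hj p) := fun j hj p => by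
    simp only [A, Set.ofPred_forall]
    refine MeasurableSet.iInter fun l => measurableSet_le ?_ measurable_const
    exact (measurable_sqNorm_query (trunc_valid hQ j hj) l (w p)).comp (measurable_past l)
  have hAT : ∀ j hj p, ∀ x ∈ A j hj p,
      sqNorm (stack (trunc Q j hj) x *ᵥ w p) ≤ ∑ l ∈ Finset.range j, τ l := fun j hj p x hx => by
    rw [sqNorm_stack_mulVec, Finset.sum_range]
    exact Finset.sum_le_sum fun l _ => hx l
  let B : (j : Fin t) → S → Set (Fin (j : ℕ) → Fin k → ℝ) := fun j p =>
    A j j.2.le p ∩ {x | τ j < sqNorm (Q j x *ᵥ w p)}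
  let B' : S → Set (Fin t → Fin k → ℝ) := fun p =>
    A t le_rfl p ∩ {x | sqNorm (o x) = 1 ∧ 1 / 5 ≤ |o x ⬝ᵥ u p|}
  have hB1 : ∀ j : Fin t, ∑ p, gau (Fin N) {g |
      QueryMaps.resp (trunc Q j j.2.le) (a + s • w p + g) ∈ B j p}
      ≤ Fintype.card S * ENNReal.ofReal ρ := fun j => by
    refine (sum_change (trunc_valid hQ j j.2.le) a w s _ y (κ j) (hκ j) (B j) (fun p => ?_)
      (fun p x hx => hAT j j.2.le p x hx.1) (fun x => ?_)).trans ?_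
    · exact (hAm j j.2.le p).inter (measurableSet_lt measurable_const
        (measurable_sqNorm_query hQ j (w p)))
    · refine le_trans ?_ (hc (Q j x) (hQ.2.1 j x) j)
      exact_mod_cast Finset.card_le_card fun p hp => by
        simp only [Finset.mem_filter, Finset.mem_univ, true_and] at hp ⊢
        exact hp.2
    · gcongr
      exact hρ j j.2
  have hB2 : ∑ p, gau (Fin N) {g | QueryMaps.resp (trunc Q t le_rfl) (a + s • w p + g) ∈ B' p}
      ≤ Fintype.card S * ENNReal.ofReal ρ := by
    refine (sum_change (trunc_valid hQ t le_rfl) a w s _ y κ' hκ' B' (fun p => ?_)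
      (fun p x hx => hAT t le_rfl p x hx.1) (fun x => ?_)).trans ?_
    · have h1 : MeasurableSet {x | sqNorm (o x) = 1} :=
        measurableSet_eq_fun (by unfold sqNorm; fun_prop) measurable_const
      have h2 : MeasurableSet {x | 1 / 5 ≤ |o x ⬝ᵥ u p|} :=
        measurableSet_le measurable_const (by unfold dotProduct; fun_prop)
      exact (hAm t le_rfl p).inter (h1.inter h2)
    · by_cases h1 : sqNorm (o x) = 1
      · refine le_trans ?_ (hc' (o x) h1)
        exact_mod_cast Finset.card_le_card fun p hp => by
          simp only [Finset.mem_filter, Finset.mem_univ, true_and] at hp ⊢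
          exact hp.2.2
      · have hz : ∀ p, x ∉ B' p := fun p h => h1 h.2.1
        simp only [hz, Finset.filter_false, Finset.card_empty, Nat.cast_zero]
        positivity
    · gcongr
  have hcov : ∀ p, {g | sqNorm (o (QueryMaps.resp Q (a + s • w p + g))) = 1 ∧
        1 / 5 ≤ |o (QueryMaps.resp Q (a + s • w p + g)) ⬝ᵥ u p|}
      ⊆ (⋃ j : Fin t, {g | QueryMaps.resp (trunc Q j j.2.le) (a + s • w p + g) ∈ B j p})
        ∪ {g | QueryMaps.resp (trunc Q t le_rfl) (a + s • w p + g) ∈ B' p} := by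
    intro p g hg
    set b := a + s • w p + g
    by_cases hall : ∀ j : Fin t, sqNorm (Q j (past (QueryMaps.resp Q b) j) *ᵥ w p) ≤ τ j
    · right
      have e : QueryMaps.resp (trunc Q t le_rfl) b = QueryMaps.resp Q b :=
        funext fun l => resp_trunc Q t le_rfl b l.1 l.2
      refine ⟨fun l => ?_, ?_⟩
      · rw [e]; exact hall l
      · rw [e]; exact hg
    · left
      push Not at hall
      -- the first round which sees more than allowed
      obtain ⟨j, hj, hmin⟩ := WellFounded.has_min (wellFounded_lt (α := Fin t))
        {j | τ j < sqNorm (Q j (past (QueryMaps.resp Q b) j) *ᵥ w p)} hall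
      refine Set.mem_iUnion.2 ⟨j, ?_, ?_⟩
      · intro l
        have e : past (QueryMaps.resp (trunc Q j j.2.le) b) l
            = past (QueryMaps.resp Q b) ⟨l.1, l.2.trans j.2⟩ :=
          funext fun i => resp_trunc Q j j.2.le b i.1 _
        rw [e]
        by_contra hl
        push Not at hl
        exact hmin ⟨l.1, l.2.trans j.2⟩ hl l.2
      · have e : QueryMaps.resp (trunc Q j j.2.le) b = past (QueryMaps.resp Q b) j :=
          funext fun i => resp_trunc Q j j.2.le b i.1 i.2
        change τ j < sqNorm (Q j (QueryMaps.resp (trunc Q j j.2.le) b) *ᵥ w p)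
        rw [e]; exact hj
  calc _ ≤ ∑ p, ((∑ j : Fin t, gau (Fin N) {g |
          QueryMaps.resp (trunc Q j j.2.le) (a + s • w p + g) ∈ B j p})
        + gau (Fin N) {g | QueryMaps.resp (trunc Q t le_rfl) (a + s • w p + g) ∈ B' p}) := by
        refine Finset.sum_le_sum fun p _ => (measure_mono (hcov p)).trans ?_
        refine (measure_union_le _ _).trans ?_
        gcongr
        exact measure_iUnion_fintype_le _ _
    _ ≤ (∑ _j : Fin t, Fintype.card S * ENNReal.ofReal ρ)
        + Fintype.card S * ENNReal.ofReal ρ := by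
        rw [Finset.sum_add_distrib, Finset.sum_comm]
        gcongr with j
        exact hB1 j
    _ = _ := by simp; ring
end rounds

end SVLB

namespace SVLB

/-! ### From success probability to the information bound -/

section reduction
variable {n : ℕ}

/-- The sign vector supported on `J`, scaled by `1 / √q`; a unit vector when `J` has `q` elements. -/
def usv (J : Finset (Fin n)) (q : ℕ) (ε : Fin n → Bool) : Fin n → ℝ := (1 / √(q : ℝ)) • sv J ε

lemma nrm_usv (J : Finset (Fin n)) (q : ℕ) (hq : 0 < q) (hJ : J.card = q) (ε : Fin n → Bool) :
    nrm (usv J q ε) = 1 := by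
  have hq' : 0 < √(q : ℝ) := Real.sqrt_pos.2 (by exact_mod_cast hq)
  rw [usv, nrm_smul, nrm, sqNorm_sv, hJ, abs_of_pos (by positivity)]
  field_simp

lemma usv_notMem (J : Finset (Fin n)) (q : ℕ) (ε : Fin n → Bool) {a : Fin n} (ha : a ∉ J) :
    usv J q ε a = 0 := by simp [usv, sv, ha]

lemma usv_dot_usv {J₁ J₂ : Finset (Fin n)} (h : Disjoint J₁ J₂) (q : ℕ) (ε δ : Fin n → Bool) :
    usv J₁ q ε ⬝ᵥ usv J₂ q δ = 0 := by
  refine Finset.sum_eq_zero fun a _ => ?_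
  by_cases ha : a ∈ J₁
  · rw [usv_notMem J₂ q δ (Finset.disjoint_left.1 h ha), mul_zero]
  · rw [usv_notMem J₁ q ε ha, zero_mul]

lemma vec_planted (J J₁ J₂ : Finset (Fin n)) (η s : ℝ) (q : ℕ) (g : Fin (n * n) → ℝ)
    (ε δ : Fin n → Bool) :
    _root_.vec n (planted J η s (mat g) (usv J₁ q ε) (usv J₂ q δ))
      = _root_.vec n (base J η s) + s • ((1 / (q : ℝ)) • tensor (sv J₁ ε) (sv J₂ δ)) + g := by
  conv_rhs => rw [← vec_mat g]
  funext p
  have hq : (1 / √(q : ℝ)) * (1 / √(q : ℝ)) = 1 / q := by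
    rw [div_mul_div_comm, Real.mul_self_sqrt (Nat.cast_nonneg q), one_mul]
  simp only [_root_.vec, tensor, planted, usv, Matrix.add_apply, Matrix.smul_apply, vecMulVec_apply,
    Pi.add_apply, Pi.smul_apply, smul_eq_mul, Matrix.of_apply, ← hq]
  ring

lemma card_signs : (Fintype.card ((Fin n → Bool) × (Fin n → Bool)) : ℝ) = 4 ^ n := by
  simp only [Fintype.card_prod, Fintype.card_fun, Fintype.card_bool, Fintype.card_fin]
  push_cast
  rw [← mul_pow]; norm_num

/-- An algorithm which succeeds on every matrix succeeds on the random planted matrix, which the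
round-by-round bound limits. -/
lemma reduction (hn : 16 ≤ n) {i k t : ℕ} (hi : 1 ≤ i) {s : ℝ} (hs : 0 < s) {η : ℝ}
    {J J₁ J₂ : Finset (Fin n)} {q : ℕ} (hq : 0 < q)
    (hJ : (η = 1 ∧ n - J.card + 1 = i) ∨ (η = -1 ∧ J.card = i))
    (h₁ : J₁.card = q) (h₂ : J₂.card = q) (h₁J : J₁ ⊆ J) (h₂J : J₂ ⊆ J) (h₁₂ : Disjoint J₁ J₂)
    (hg : gau (Fin (n * n)) (goodG n (s / 4000))ᶜ ≤ 1 / 10)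
    {Ω : Type} [MeasurableSpace Ω] (μ : Measure Ω) [IsProbabilityMeasure μ]
    (Qf : Ω → QueryMaps (n * n) k t)
    (out : Ω → (Fin t → Fin k → ℝ) → (Fin n → ℝ) × (Fin n → ℝ))
    (hQ : ∀ ω, (Qf ω).Valid)
    (hQm : ∀ (j : Fin t) (i' : Fin k) (l : Fin (n * n)),
            Measurable fun p : Ω × (Fin (j : ℕ) → Fin k → ℝ) => Qf p.1 j p.2 i' l)
    (hom : ∀ l : Fin n, Measurable fun p : Ω × (Fin t → Fin k → ℝ) => (out p.1 p.2).1 l)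
    (hsucc : ∀ A : Matrix (Fin n) (Fin n) ℝ,
            (9 / 10 : ℝ≥0∞) ≤
              μ {ω | sqNorm (out ω (QueryMaps.resp (Qf ω) (_root_.vec n A))).1 = 1 ∧
                    sqNorm (out ω (QueryMaps.resp (Qf ω) (_root_.vec n A))).2 = 1 ∧
                    ∃ u v : Fin n → ℝ, sqNorm u = 1 ∧ sqNorm v = 1 ∧
                      A.mulVec v = singVal A i • u ∧
                      Aᵀ.mulVec u = singVal A i • v ∧
                      Real.sqrt (sqNorm
                        ((out ω (QueryMaps.resp (Qf ω) (_root_.vec n A))).1 - u)) ≤ 1 / 10 ∧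
                      Real.sqrt (sqNorm
                        ((out ω (QueryMaps.resp (Qf ω) (_root_.vec n A))).2 - v)) ≤ 1 / 10})
    (y ρ : ℝ) (τ : ℕ → ℝ)
    (hρ : ∀ j < t, Real.exp (-y) + Real.exp (s ^ 2 * (∑ l ∈ Finset.range j, τ l) + y)
      * Real.exp (-(q * τ j / 8) + k / (2 * q)) ≤ ρ)
    (hρ' : Real.exp (-y) + Real.exp (s ^ 2 * (∑ l ∈ Finset.range t, τ l) + y)
      * (2 * Real.exp (-(q / 50))) ≤ ρ) :
    (9 / 10 : ℝ≥0∞) * (9 / 10) ≤ (t + 1) * ENNReal.ofReal ρ := by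
  let S := (Fin n → Bool) × (Fin n → Bool)
  let u : S → Fin n → ℝ := fun p => usv J₁ q p.1
  let v : S → Fin n → ℝ := fun p => usv J₂ q p.2
  let w : S → Fin (n * n) → ℝ := fun p => (1 / (q : ℝ)) • tensor (sv J₁ p.1) (sv J₂ p.2)
  let a := _root_.vec n (base J η s)
  let f : S → Ω × (Fin (n * n) → ℝ) → Fin n → ℝ := fun p z =>
    (out z.1 (QueryMaps.resp (Qf z.1) (a + s • w p + z.2))).1
  let E : S → Set (Ω × (Fin (n * n) → ℝ)) := fun p =>
    {z | sqNorm (f p z) = 1 ∧ 1 / 5 ≤ |f p z ⬝ᵥ u p|}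
  have hf : ∀ p l, Measurable fun z => f p z l := fun p l => by
    have h1 : Measurable fun z : Ω × (Fin (n * n) → ℝ) =>
        (z.1, QueryMaps.resp (Qf z.1) (a + s • w p + z.2)) :=
      measurable_fst.prodMk ((measurable_resp Qf hQm).comp
        (measurable_fst.prodMk (measurable_snd.const_add _)))
    exact (hom l).comp h1
  have hE : ∀ p, MeasurableSet (E p) := fun p => by
    have := hf p
    have e1 : MeasurableSet {z | sqNorm (f p z) = 1} :=
      measurableSet_eq_fun (by unfold sqNorm; fun_prop) measurable_const
    have e2 : MeasurableSet {z | 1 / 5 ≤ |f p z ⬝ᵥ u p|} :=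
      measurableSet_le measurable_const (by unfold dotProduct; fun_prop)
    exact e1.inter e2
  have hcard : (Fintype.card S : ℝ) = 4 ^ n := card_signs
  -- upper bound, for every seed
  have hup : ∀ ω, ∑ p, gau (Fin (n * n)) (Prod.mk ω ⁻¹' E p)
      ≤ Fintype.card S * ((t + 1) * ENNReal.ofReal ρ) := by
    intro ω
    refine round_bound (hQ ω) a w u s y ρ τ (fun j => Real.exp (-(q * τ j / 8) + k / (2 * q)))
      (2 * Real.exp (-(q / 50))) (fun j => (Real.exp_pos _).le) (by positivity)
      (fun x => (out ω x).1) (fun l => (hom l).comp measurable_prodMk_left) ?_ ?_ hρ hρ'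
    · intro M hM j
      rw [hcard]
      exact card_query_tail M hM J₁ J₂ q hq h₁ h₂ (τ j)
    · intro x hx
      have h := card_corr x hx J₁ q hq
      have e : (Finset.univ.filter fun p : S => 1 / 5 ≤ |x ⬝ᵥ u p|)
          = (Finset.univ.filter fun ε : Fin n → Bool =>
            1 / 5 ≤ |x ⬝ᵥ ((1 / √(q : ℝ)) • sv J₁ ε)|) ×ˢ (Finset.univ : Finset (Fin n → Bool)) := by
        ext p
        constructor
        · intro h
          exact Finset.mem_product.2 ⟨Finset.mem_filter.2 ⟨Finset.mem_univ _,
            (Finset.mem_filter.1 h).2⟩, Finset.mem_univ _⟩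
        · intro h
          exact Finset.mem_filter.2 ⟨Finset.mem_univ _,
            (Finset.mem_filter.1 (Finset.mem_product.1 h).1).2⟩
      rw [e, Finset.card_product, hcard]
      have h4 : (4 : ℝ) ^ n = 2 ^ n * 2 ^ n := by rw [← mul_pow]; norm_num
      have h5 : ((Finset.univ : Finset (Fin n → Bool)).card : ℝ) = 2 ^ n := by simp
      push_cast
      rw [h5, h4]
      calc _ ≤ 2 ^ n * (2 * Real.exp (-(q / 50))) * 2 ^ n := by gcongr
        _ = _ := by ring
  -- lower bound, for every plant and every typical noise matrix
  have hlow : ∀ p, ∀ g ∈ goodG n (s / 4000), (9 / 10 : ℝ≥0∞) ≤ μ ((fun ω => (ω, g)) ⁻¹' E p) := by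
    intro p g hgg
    refine (hsucc (planted J η s (mat g) (u p) (v p))).trans (measure_mono ?_)
    rintro ω ⟨ha, -, x, z, hx, hz, hxz, hzx, hc, -⟩
    have hvec : _root_.vec n (planted J η s (mat g) (u p) (v p)) = a + s • w p + g :=
      vec_planted J J₁ J₂ η s q g p.1 p.2
    rw [hvec] at ha hc
    refine ⟨ha, ?_⟩
    refine corr_of_singVal (G := mat g) hs i hi hJ (fun x y => ?_) (nrm_usv J₁ q hq h₁ p.1)
      (nrm_usv J₂ q hq h₂ p.2) (usv_dot_usv h₁₂ q p.1 p.2)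
      (fun b hb => usv_notMem J₁ q p.1 fun h => hb (h₁J h))
      (fun b hb => usv_notMem J₂ q p.2 fun h => hb (h₂J h))
      (by rw [nrm, hx, Real.sqrt_one]) (by rw [nrm, hz, Real.sqrt_one]) hxz hzx hc
    have := goodG_bound hn (s / 4000) g hgg (x := x) (y := y)
    refine this.trans (le_of_eq ?_)
    ring
  have hgood : (9 / 10 : ℝ≥0∞) ≤ gau (Fin (n * n)) (goodG n (s / 4000)) := by
    have h1 := prob_add_prob_compl (μ := gau (Fin (n * n))) (measurableSet_goodG n (s / 4000))
    have h2 : (1 : ℝ≥0∞) ≤ gau (Fin (n * n)) (goodG n (s / 4000)) + 1 / 10 :=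
      h1.symm.le.trans (by gcongr)
    have h3 : (9 / 10 : ℝ≥0∞) + 1 / 10 = 1 := by
      rw [ENNReal.div_add_div_same]
      norm_num
      exact ENNReal.div_self (by norm_num) (by norm_num)
    have h4 : (1 / 10 : ℝ≥0∞) ≠ ⊤ := ENNReal.div_ne_top (by norm_num) (by norm_num)
    exact (ENNReal.add_le_add_iff_right h4).1 (h3.le.trans h2)
  have hprod : ∀ p, (9 / 10 : ℝ≥0∞) * (9 / 10) ≤ ∫⁻ ω, gau (Fin (n * n)) (Prod.mk ω ⁻¹' E p) ∂μ := by
    intro p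
    rw [← Measure.prod_apply (hE p), Measure.prod_apply_symm (hE p)]
    calc (9 / 10 : ℝ≥0∞) * (9 / 10) ≤ 9 / 10 * gau (Fin (n * n)) (goodG n (s / 4000)) := by gcongr
      _ = ∫⁻ _ in goodG n (s / 4000), 9 / 10 ∂gau (Fin (n * n)) := by simp
      _ ≤ ∫⁻ g in goodG n (s / 4000), μ ((fun ω => (ω, g)) ⁻¹' E p) ∂gau (Fin (n * n)) :=
          setLIntegral_mono' (measurableSet_goodG _ _) (hlow p)
      _ ≤ _ := setLIntegral_le_lintegral _ _
  have hfin : (Fintype.card S : ℝ≥0∞) * ((9 / 10 : ℝ≥0∞) * (9 / 10))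
      ≤ Fintype.card S * ((t + 1) * ENNReal.ofReal ρ) := by
    calc _ = ∑ _p : S, (9 / 10 : ℝ≥0∞) * (9 / 10) := by simp
      _ ≤ ∑ p : S, ∫⁻ ω, gau (Fin (n * n)) (Prod.mk ω ⁻¹' E p) ∂μ :=
          Finset.sum_le_sum fun p _ => hprod p
      _ = ∫⁻ ω, ∑ p : S, gau (Fin (n * n)) (Prod.mk ω ⁻¹' E p) ∂μ :=
          (lintegral_finsetSum _ fun p _ => measurable_measure_prodMk_left (hE p)).symm
      _ ≤ ∫⁻ _, Fintype.card S * ((t + 1) * ENNReal.ofReal ρ) ∂μ := lintegral_mono hup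
      _ = _ := by simp
  refine (ENNReal.mul_le_mul_iff_right ?_ (ENNReal.natCast_ne_top _)).1 hfin
  exact_mod_cast Fintype.card_ne_zero
end reduction

end SVLB

namespace SVLB

/-! ### Choice of the parameters -/

theorem exists_threshold : ∃ n₀ : ℕ, ∀ n : ℕ, n₀ ≤ n →
    16 ≤ n ∧ 10 ^ 10 ≤ Real.log n ∧ 1000 * (2 * Real.log n + 1) ≤ n := by
  have h1 : ∀ᶠ n : ℕ in Filter.atTop, (10 : ℝ) ^ 10 ≤ Real.log n :=
    (Real.tendsto_log_atTop.comp tendsto_natCast_atTop_atTop).eventually_ge_atTop _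
  have h2 : ∀ᶠ n : ℕ in Filter.atTop, ‖Real.log n‖ ≤ 1 / 4000 * ‖(n : ℝ)‖ :=
    tendsto_natCast_atTop_atTop.eventually
      (Real.isLittleO_log_id_atTop.bound (by norm_num : (0 : ℝ) < 1 / 4000))
  obtain ⟨n₀, h⟩ := Filter.eventually_atTop.1
    ((Filter.eventually_ge_atTop 16).and ((Filter.eventually_ge_atTop 2000).and (h1.and h2)))
  refine ⟨n₀, fun n hn => ?_⟩
  obtain ⟨h16, h2000, h1, h2⟩ := h n hn
  refine ⟨h16, h1, ?_⟩
  have h3 := (le_abs_self _).trans h2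
  rw [Real.norm_natCast] at h3
  have h4 : (2000 : ℝ) ≤ n := by exact_mod_cast h2000
  linarith

/-- The first alternative is used for `i ≤ n / 2` and the second one otherwise, so that `J` always has at least `n / 2` elements and contains two disjoint blocks of size `n / 4`. -/
theorem exists_blocks {n i : ℕ} (hi : 1 ≤ i) (hin : i ≤ n) :
    ∃ (η : ℝ) (J J₁ J₂ : Finset (Fin n)),
      ((η = 1 ∧ n - J.card + 1 = i) ∨ (η = -1 ∧ J.card = i)) ∧
      J₁.card = n / 4 ∧ J₂.card = n / 4 ∧ J₁ ⊆ J ∧ J₂ ⊆ J ∧ Disjoint J₁ J₂ := by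
  have key : ∀ m, m ≤ n → n ≤ 2 * m → ∃ J J₁ J₂ : Finset (Fin n), J.card = m ∧
      J₁.card = n / 4 ∧ J₂.card = n / 4 ∧ J₁ ⊆ J ∧ J₂ ⊆ J ∧ Disjoint J₁ J₂ := by
    intro m hm hm2
    obtain ⟨J, -, hJ⟩ := Finset.exists_subset_card_eq
      (s := (Finset.univ : Finset (Fin n))) (n := m) (by simpa using hm)
    obtain ⟨J₁, h₁, h₁c⟩ := Finset.exists_subset_card_eq (s := J) (n := n / 4) (by omega)
    have hc : (J \ J₁).card = m - n / 4 := by rw [Finset.card_sdiff_of_subset h₁, hJ, h₁c]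
    obtain ⟨J₂, h₂, h₂c⟩ := Finset.exists_subset_card_eq (s := J \ J₁) (n := n / 4) (by omega)
    exact ⟨J, J₁, J₂, hJ, h₁c, h₂c, h₁, h₂.trans Finset.sdiff_subset,
      (Finset.disjoint_sdiff.mono_right h₂)⟩
  by_cases h : 2 * i ≤ n
  · obtain ⟨J, J₁, J₂, hJ, h'⟩ := key (n - i + 1) (by omega) (by omega)
    exact ⟨1, J, J₁, J₂, .inl ⟨rfl, by omega⟩, h'⟩
  · obtain ⟨J, J₁, J₂, hJ, h'⟩ := key i hin (by omega)
    exact ⟨-1, J, J₁, J₂, .inr ⟨rfl, by omega⟩, h'⟩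

/-- With `s = √n log n`, the Gaussian noise has operator norm at most `s / 1000` with probability
at least `9/10`. The net has `exp (O(n log n))` pairs of points, beaten by the tail
`exp (-Ω(n (log n) ^ 2))`. -/
theorem gau_goodG_compl_le {n : ℕ} (hn : 16 ≤ n) (hL : 10 ^ 10 ≤ Real.log n) :
    gau (Fin (n * n)) (goodG n (√n * Real.log n / 4000))ᶜ ≤ 1 / 10 := by
  set L := Real.log n with hLdef
  have hn' : (16 : ℝ) ≤ n := by exact_mod_cast hn
  refine (gau_goodG_compl n _ (by positivity)).trans ?_
  have h10 : (1 / 10 : ℝ≥0∞) = ENNReal.ofReal (1 / 10) := by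
    rw [ENNReal.ofReal_div_of_pos (by norm_num)]; norm_num
  rw [h10]
  apply ENNReal.ofReal_le_ofReal
  have e1 : (√n * L / 4000) ^ 2 = n * L ^ 2 / 16000000 := by
    rw [div_pow, mul_pow, Real.sq_sqrt (by positivity)]; norm_num
  have h1 : (2 * (n : ℝ) + 1) ^ (2 * n) ≤ Real.exp (4 * n * L) := by
    calc (2 * (n : ℝ) + 1) ^ (2 * n) ≤ ((n : ℝ) ^ 2) ^ (2 * n) := by
          gcongr; nlinarith
      _ = Real.exp (4 * n * L) := by
          rw [← Real.exp_log (show (0 : ℝ) < n by positivity), ← Real.exp_nat_mul,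
            ← Real.exp_nat_mul, Real.exp_log (show (0 : ℝ) < n by positivity)]
          congr 1; push_cast; ring
  calc _ ≤ Real.exp (4 * n * L) * Real.exp (-((√n * L / 4000) ^ 2 / 32)) := by gcongr
    _ = Real.exp (4 * n * L - n * L ^ 2 / 16000000 / 32) := by
        rw [← Real.exp_add, e1]; ring_nf
    _ ≤ Real.exp (-9) := by
        apply Real.exp_le_exp.2
        have : (16 : ℝ) * 10 ^ 10 ≤ n * L := by gcongr
        nlinarith
    _ ≤ 1 / 10 := by
        rw [Real.exp_neg, ← one_div]
        apply one_div_le_one_div_of_le (by norm_num)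
        have := Real.add_one_le_exp 9
        linarith

/-- The two smallness conditions of `reduction` hold with `ρ = 2 exp (-L)` for the geometric
schedule `τ j = 400 κ L / N * M ^ j`, `M = 1 + 80 L ^ 2`. With `s = √N L` this schedule gives
`s ^ 2 * ∑ l < j, τ l = 5 κ L (M ^ j - 1)`, while the exponent `q τ j / 8` gained in round `j` is at
least `10 κ L M ^ j`. -/
theorem schedule {N k q L κ : ℝ} (hN : 16 ≤ N) (hL : 10 ^ 10 ≤ L) (hq : N / 5 ≤ q)
    (hκ : κ = k / N) (hκ1 : 1 ≤ κ) (hNL : 1000 * (2 * L + 1) ≤ N) (τ : ℕ → ℝ)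
    (hτ : ∀ j, τ j = 400 * κ * L / N * (1 + 80 * L ^ 2) ^ j) (t : ℕ)
    (ht : 5 * κ * L * ((1 + 80 * L ^ 2) ^ t - 1) ≤ N / 1000) :
    (∀ j, Real.exp (-L) + Real.exp ((√N * L) ^ 2 * (∑ l ∈ Finset.range j, τ l) + L)
      * Real.exp (-(q * τ j / 8) + k / (2 * q)) ≤ 2 * Real.exp (-L)) ∧
    Real.exp (-L) + Real.exp ((√N * L) ^ 2 * (∑ l ∈ Finset.range t, τ l) + L)
      * (2 * Real.exp (-(q / 50))) ≤ 2 * Real.exp (-L) := by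
  have hN0 : N ≠ 0 := by positivity
  set M := 1 + 80 * L ^ 2 with hM
  have hs : ∀ j, (√N * L) ^ 2 * (∑ l ∈ Finset.range j, τ l) = 5 * κ * L * (M ^ j - 1) := by
    intro j
    have hg := geom_sum_mul M j
    have e : M - 1 = 80 * L ^ 2 := by rw [hM]; ring
    rw [e] at hg
    simp only [hτ]
    rw [← Finset.mul_sum, ← hg, mul_pow, Real.sq_sqrt (by positivity)]
    field_simp
    ring
  have hM1 : ∀ j, 1 ≤ M ^ j := fun j => one_le_pow₀ (by rw [hM]; nlinarith)
  constructor
  · intro j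
    have h1 : 10 * κ * L * M ^ j ≤ q * τ j / 8 := by
      have : 10 * κ * L * M ^ j = N / 5 * τ j / 8 := by rw [hτ]; field_simp; ring
      rw [this]
      have : 0 ≤ τ j := by rw [hτ]; have := hM1 j; positivity
      gcongr
    have h2 : k / (2 * q) ≤ 5 / 2 * κ := by
      have hk : k = κ * N := by rw [hκ]; field_simp
      rw [hk, div_le_iff₀ (by linarith)]
      nlinarith
    have h3 : 5 * κ * L * 1 ≤ 5 * κ * L * M ^ j := by gcongr; exact hM1 j
    have h4 : 1 * L ≤ κ * L := by gcongr
    have h5 : κ * 10 ^ 10 ≤ κ * L := by gcongr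
    rw [hs, ← Real.exp_add]
    have : Real.exp (5 * κ * L * (M ^ j - 1) + L + (-(q * τ j / 8) + k / (2 * q)))
        ≤ Real.exp (-L) := by
      apply Real.exp_le_exp.2
      linarith
    linarith
  · rw [hs]
    have h2 : (2 : ℝ) ≤ Real.exp 1 := by have := Real.add_one_le_exp 1; linarith
    have : Real.exp (5 * κ * L * (M ^ t - 1) + L) * (2 * Real.exp (-(q / 50)))
        ≤ Real.exp (-L) := by
      calc _ ≤ Real.exp (5 * κ * L * (M ^ t - 1) + L) * (Real.exp 1 * Real.exp (-(q / 50))) := by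
            gcongr
        _ = Real.exp (5 * κ * L * (M ^ t - 1) + L + (1 + -(q / 50))) := by
            rw [← Real.exp_add, ← Real.exp_add]
        _ ≤ _ := by
            apply Real.exp_le_exp.2
            linarith
    linarith

/-- The bound on `t` follows once a run with `t < log n` rounds and a total budget of at most
`n / 1000` is excluded: exceeding the budget means `n ^ 2 / k ≤ (log n) ^ (5 t)`. -/
theorem final_arith {n k t : ℕ} (hn : 16 ≤ n) (hL : 10 ^ 10 ≤ Real.log n) (hk : n ≤ k)
    (h : t < Real.log n → 5 * ((k : ℝ) / n) * Real.log n *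
      ((1 + 80 * Real.log n ^ 2) ^ t - 1) ≤ n / 1000 → False) :
    1 / 5 * (Real.log ((n : ℝ) ^ 2 / k) / Real.log (Real.log n)) ≤ (t : ℝ) := by
  set L := Real.log n with hLdef
  have hn' : (16 : ℝ) ≤ n := by exact_mod_cast hn
  have hk' : (n : ℝ) ≤ k := by exact_mod_cast hk
  have hk0 : (0 : ℝ) < k := by linarith
  have hLL : 1 ≤ Real.log L := by
    rw [Real.le_log_iff_exp_le (by linarith)]
    have := Real.exp_one_lt_d9
    linarith
  rcases le_or_gt L t with htL | htL
  · have h1 : Real.log ((n : ℝ) ^ 2 / k) ≤ L := by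
      apply Real.log_le_log (by positivity)
      rw [div_le_iff₀ hk0]
      nlinarith
    have h2 : Real.log ((n : ℝ) ^ 2 / k) / Real.log L ≤ L := by
      rw [div_le_iff₀ (by linarith)]
      nlinarith
    linarith
  · have h1 := not_le.1 (h htL)
    have ht : t ≠ 0 := by
      rintro rfl
      simp at h1
      linarith
    obtain ⟨r, rfl⟩ := Nat.exists_eq_succ_of_ne_zero ht
    have h3 : (n : ℝ) ^ 2 / k ≤ L ^ (5 * (r + 1)) := by
      have e1 : (1 + 80 * L ^ 2) ^ (r + 1) ≤ (L ^ 3) ^ (r + 1) := by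
        gcongr
        nlinarith [sq_nonneg L]
      have e2 : 5000 * L ≤ (L ^ 2) ^ (r + 1) := by
        calc 5000 * L ≤ L ^ 2 := by nlinarith
          _ ≤ _ := le_self_pow₀ (one_le_pow₀ (by linarith)) (by omega)
      have e3 : L ^ (5 * (r + 1)) = (L ^ 2) ^ (r + 1) * (L ^ 3) ^ (r + 1) := by
        rw [← mul_pow, ← pow_add, ← pow_mul]
      rw [e3]
      calc (n : ℝ) ^ 2 / k ≤ 5000 * L * (1 + 80 * L ^ 2) ^ (r + 1) := by
            rw [div_le_iff₀ hk0]
            have h4 : (n : ℝ) / 1000 ≤ 5 * ((k : ℝ) / n) * L * (1 + 80 * L ^ 2) ^ (r + 1) := by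
              refine h1.le.trans ?_
              gcongr
              simp
            have e4 : 5 * ((k : ℝ) / n) * L * (1 + 80 * L ^ 2) ^ (r + 1)
              = 5 * k * L * (1 + 80 * L ^ 2) ^ (r + 1) / n := by ring
            rw [e4, le_div_iff₀ (by linarith)] at h4
            linarith
        _ ≤ _ := by gcongr
    have h5 := Real.log_le_log (by positivity) h3
    rw [Real.log_pow] at h5
    push_cast at h5
    have h6 : Real.log ((n : ℝ) ^ 2 / k) / Real.log L ≤ 5 * (r + 1) := by
      rwa [div_le_iff₀ (by linarith)]
    push_cast
    linarith

end SVLB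

/-- Round lower bound for approximating the `i`-th left and right singular vectors. -/
theorem singular_vector_round_lower_bound :
    ∃ (c : ℝ) (n₀ : ℕ), 0 < c ∧
      ∀ (n i k t : ℕ), n₀ ≤ n → 1 ≤ i → i ≤ n → n ≤ k → k ≤ n ^ 2 →
      ∀ (Ω : Type) [MeasurableSpace Ω] (μ : Measure Ω) [IsProbabilityMeasure μ]
        (Qf : Ω → QueryMaps (n * n) k t)
        (out : Ω → (Fin t → Fin k → ℝ) → (Fin n → ℝ) × (Fin n → ℝ)),
        (∀ ω, (Qf ω).Valid) →
        (∀ (j : Fin t) (i' : Fin k) (l : Fin (n * n)),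
            Measurable fun p : Ω × (Fin (j : ℕ) → Fin k → ℝ) => Qf p.1 j p.2 i' l) →
        (∀ l : Fin n,
            Measurable fun p : Ω × (Fin t → Fin k → ℝ) => (out p.1 p.2).1 l) →
        (∀ l : Fin n,
            Measurable fun p : Ω × (Fin t → Fin k → ℝ) => (out p.1 p.2).2 l) →
        (∀ A : Matrix (Fin n) (Fin n) ℝ,
            (9 / 10 : ℝ≥0∞) ≤
              μ {ω | sqNorm (out ω (QueryMaps.resp (Qf ω) (vec n A))).1 = 1 ∧
                    sqNorm (out ω (QueryMaps.resp (Qf ω) (vec n A))).2 = 1 ∧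
                    ∃ u v : Fin n → ℝ, sqNorm u = 1 ∧ sqNorm v = 1 ∧
                      A.mulVec v = singVal A i • u ∧
                      Aᵀ.mulVec u = singVal A i • v ∧
                      Real.sqrt (sqNorm
                        ((out ω (QueryMaps.resp (Qf ω) (vec n A))).1 - u)) ≤ 1 / 10 ∧
                      Real.sqrt (sqNorm
                        ((out ω (QueryMaps.resp (Qf ω) (vec n A))).2 - v)) ≤ 1 / 10}) →
        c * (Real.log ((n : ℝ) ^ 2 / k) / Real.log (Real.log n)) ≤ (t : ℝ) := by
  obtain ⟨n₀, hn₀⟩ := SVLB.exists_threshold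
  refine ⟨1 / 5, n₀, by norm_num, ?_⟩
  intro n i k t hn hi hin hnk _ Ω _ μ _ Qf out hQ hQm hom _ hsucc
  obtain ⟨h16, hL, hNL⟩ := hn₀ n hn
  refine SVLB.final_arith h16 hL hnk fun htL ht => ?_
  have hn' : (16 : ℝ) ≤ n := by exact_mod_cast h16
  have hk' : (n : ℝ) ≤ k := by exact_mod_cast hnk
  obtain ⟨η, J, J₁, J₂, hJ, h₁, h₂, h₁J, h₂J, h₁₂⟩ := SVLB.exists_blocks hi hin
  have hq : (n : ℝ) / 5 ≤ ((n / 4 : ℕ) : ℝ) := by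
    have : n ≤ 5 * (n / 4) := by omega
    have : (n : ℝ) ≤ 5 * ((n / 4 : ℕ) : ℝ) := by exact_mod_cast this
    linarith
  obtain ⟨hr, hf⟩ := SVLB.schedule hn' hL hq rfl ((one_le_div (by linarith)).2 hk') hNL
    (fun j => 400 * ((k : ℝ) / n) * Real.log n / n * (1 + 80 * Real.log n ^ 2) ^ j)
    (fun _ => rfl) t ht
  have hmain := SVLB.reduction h16 hi
    (show 0 < √(n : ℝ) * Real.log n from mul_pos (Real.sqrt_pos.2 (by linarith)) (by linarith))
    (show 0 < n / 4 by omega) hJ h₁ h₂ h₁J h₂J h₁₂ (SVLB.gau_goodG_compl_le h16 hL) μ Qf out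
    hQ hQm hom hsucc (Real.log n) _ _ (fun j _ => hr j) hf
  have e1 : (9 / 10 : ℝ≥0∞) = ENNReal.ofReal (9 / 10) := by
    rw [ENNReal.ofReal_div_of_pos (by norm_num)]; norm_num
  have e2 : ((t : ℝ≥0∞) + 1) = ENNReal.ofReal (t + 1) := by
    rw [ENNReal.ofReal_add (by positivity) (by norm_num)]; simp
  rw [e1, e2, ← ENNReal.ofReal_mul (by norm_num), ← ENNReal.ofReal_mul (by positivity),
    ENNReal.ofReal_le_ofReal_iff (by positivity), Real.exp_neg,
    Real.exp_log (by linarith)] at hmain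
  have e3 : ((t : ℝ) + 1) * (2 * (n : ℝ)⁻¹) = 2 * (t + 1) / n := by ring
  rw [e3, le_div_iff₀ (by linarith)] at hmain
  linarith
end
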